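/- arXiv:1309.7076 — 5 statements merged into one kernel-verified Lean document; each statement's English description precedes it below -/
import Mathlib

section
/- For any field F and any n × n matrices x₁, …, x₂ₙ over F, the standard polynomial of degree 2n vanishes: ∑_{σ ∈ Sym(2n)} sgn(σ) x_{σ(1)} ⋯ x_{σ(2n)} = 0. -/
/-- The standard polynomial `[[x₁,…,x_k]] = ∑_{σ ∈ Sym(k)} sgn(σ) x_{σ(1)} ⋯ x_{σ(k)}`
in an associative ring. -/
noncomputable def standardPolynomial {R : Type*} [Ring R] {k : ℕ} (x : Fin k → R) : R :=
  ∑ σ : Equiv.Perm (Fin k), (Equiv.Perm.sign σ : ℤ) • (List.ofFn fun i => x (σ i)).prod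

/-!
This is Rosset's proof. Over the exterior algebra on `e₁, …, e_k`, put `A = ∑ᵢ xᵢ eᵢ`. Scalars
commute with the `eᵢ` and repeated `eᵢ` give zero, so `A ^ k = [[x₁, …, x_k]] e₁ ∧ ⋯ ∧ e_k`, and it
is enough to show that `A ^ (2n) = 0`. The entries of `A` anticommute, whence
`tr (A ^ (2m)) = tr (A * A ^ (2m - 1)) = -tr (A ^ (2m - 1) * A)` vanishes for `m ≥ 1`. The entries
of `A ^ 2` commute with each other, so over a torsion-free ring `(A ^ 2) ^ n = 0` because all its
power traces are zero. Since `[[x₁, …, x_k]]` is multilinear, the torsion-free ring `ℤ` suffices: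
matrix units are defined over it.

For the power traces of `M` with commuting entries, let `p = det (X - M)` and `B = adj (X - M)`.
Jacobi's formula gives `p' = tr B`, and `X B = p + M B`. If the power traces vanish, the latter
yields `tr (M ^ (k + 1) B) = X ^ k tr (M B)`, so `p tr (M B) = tr (p(M) M B) = 0` by
Cayley–Hamilton. Hence `X p' = n p`, which forces `p = X ^ n` in the absence of torsion.
-/

open Matrix Polynomial

section PowerSums

variable {R n : Type*} [CommRing R] [Fintype n] [DecidableEq n]

theorem derivative_det (M : Matrix n n R[X]) :
    derivative M.det = (M.adjugate * M.map derivative).trace := by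
  have sum_updateCol (j : n) : ∑ i, M.adjugate j i * derivative (M i j) =
      (M.updateCol j fun i => derivative (M i j)).det := by
    rw [← cramer_apply, cramer_eq_adjugate_mulVec]
    rfl
  simp only [trace, diag_apply, mul_apply, map_apply, sum_updateCol, det_apply', derivative_sum,
    derivative_intCast_mul, derivative_prod_finset, Finset.mul_sum]
  rw [Finset.sum_comm]
  refine Finset.sum_congr rfl fun j _ => Finset.sum_congr rfl fun σ _ => ?_
  rw [← Finset.prod_erase_mul _ _ (Finset.mem_univ j), updateCol_self]
  congr 2
  refine Finset.prod_congr rfl fun i hi => ?_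
  rw [updateCol_ne (Finset.ne_of_mem_erase hi)]

theorem derivative_charpoly (M : Matrix n n R) :
    derivative M.charpoly = M.charmatrix.adjugate.trace := by
  have map_derivative : M.charmatrix.map derivative = 1 := by
    ext i j : 1
    rcases eq_or_ne i j with rfl | hij <;> simp [*]
  rw [charpoly, derivative_det, map_derivative, mul_one]

theorem X_smul_adjugate_charmatrix (M : Matrix n n R) :
    (X : R[X]) • M.charmatrix.adjugate =
      M.charpoly • 1 + M.map C * M.charmatrix.adjugate := by
  rw [charpoly, ← mul_adjugate, charmatrix, sub_mul, scalar_apply, ← smul_eq_diagonal_mul]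
  simp

theorem trace_map_C_pow_mul_adjugate_charmatrix {M : Matrix n n R}
    (hM : ∀ k, (M ^ (k + 1)).trace = 0) (k : ℕ) :
    (M.map C ^ (k + 1) * M.charmatrix.adjugate).trace =
      X ^ k * (M.map C * M.charmatrix.adjugate).trace := by
  have trace_pow (m : ℕ) : (M.map (C : R → R[X]) ^ (m + 1)).trace = 0 := by
    rw [← RingHom.mapMatrix_apply, ← map_pow, RingHom.mapMatrix_apply,
      ← AddMonoidHom.map_trace, hM, map_zero]
  induction k with
  | zero => simp
  | succ k ih =>
    calc (M.map C ^ (k + 2) * M.charmatrix.adjugate).trace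
        = (M.map C ^ (k + 1) * (X • M.charmatrix.adjugate)).trace := by
          rw [X_smul_adjugate_charmatrix, mul_add, trace_add, mul_smul_comm, mul_one, trace_smul,
            trace_pow, smul_zero, zero_add, ← mul_assoc, ← pow_succ]
      _ = X ^ (k + 1) * (M.map C * M.charmatrix.adjugate).trace := by
          rw [mul_smul_comm, trace_smul, ih, smul_eq_mul, ← mul_assoc, ← pow_succ']

theorem trace_map_C_mul_adjugate_charmatrix {M : Matrix n n R}
    (hM : ∀ k, (M ^ (k + 1)).trace = 0) :
    (M.map C * M.charmatrix.adjugate).trace = 0 := by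
  have trace_aeval (p : R[X]) :
      (aeval (M.map C) p * (M.map C * M.charmatrix.adjugate)).trace =
        p * (M.map C * M.charmatrix.adjugate).trace := by
    induction p using Polynomial.induction_on' with
    | add p q hp hq => rw [map_add, add_mul, trace_add, hp, hq, add_mul]
    | monomial k c =>
      rw [aeval_monomial, ← Algebra.smul_def, smul_mul_assoc, ← mul_assoc, ← pow_succ, trace_smul,
        trace_map_C_pow_mul_adjugate_charmatrix hM, smul_eq_C_mul, ← mul_assoc,
        C_mul_X_pow_eq_monomial]
  have cayley_hamilton : aeval (M.map C) M.charpoly = 0 :=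
    (aeval_algHom_apply CAlgHom.mapMatrix M _).trans <| by rw [M.aeval_self_charpoly, map_zero]
  apply M.charpoly_monic.mul_right_eq_zero_iff.mp
  rw [← trace_aeval, cayley_hamilton, zero_mul, trace_zero]

theorem eq_X_pow_of_X_mul_derivative_eq [IsAddTorsionFree R] {p : R[X]} (hp : p.Monic) {m : ℕ}
    (h : X * derivative p = m • p) : p = X ^ m := by
  have coeff_smul_eq (k : ℕ) : k • p.coeff k = m • p.coeff k := by
    rcases k with _ | k
    · simpa using congrArg (coeff · 0) h
    · simpa [coeff_X_mul, coeff_derivative, mul_comm] using congrArg (coeff · (k + 1)) h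
  have eq_of_coeff_ne_zero {k : ℕ} (hk : p.coeff k ≠ 0) : k = m :=
    Nat.cast_injective <| smul_left_injective ℤ hk <| by
      simpa only [natCast_zsmul] using coeff_smul_eq k
  nontriviality R
  have natDegree_eq : p.natDegree = m := eq_of_coeff_ne_zero (by simp [hp])
  ext k
  rcases eq_or_ne k m with rfl | hk
  · rw [coeff_X_pow_self, ← natDegree_eq, hp.coeff_natDegree]
  · rw [coeff_X_pow, if_neg hk, by_contra (hk <| eq_of_coeff_ne_zero ·)]

theorem matrix_pow_card_eq_zero_of_trace_pow [IsAddTorsionFree R] {M : Matrix n n R}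
    (hM : ∀ k, (M ^ (k + 1)).trace = 0) : M ^ Fintype.card n = 0 := by
  have euler : X * derivative M.charpoly = Fintype.card n • M.charpoly := by
    rw [derivative_charpoly, ← smul_eq_mul, ← trace_smul, X_smul_adjugate_charmatrix, trace_add,
      trace_map_C_mul_adjugate_charmatrix hM, add_zero, trace_smul, trace_one, smul_eq_mul,
      nsmul_eq_mul, mul_comm]
  have charpoly_eq := eq_X_pow_of_X_mul_derivative_eq M.charpoly_monic euler
  simpa only [charpoly_eq, map_pow, aeval_X] using M.aeval_self_charpoly

end PowerSums

section Anticommuting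

theorem trace_mul_eq_neg_of_anticommute {R m n : Type*} [NonUnitalNonAssocRing R]
    [Fintype m] [Fintype n] {P : Matrix m n R} {Q : Matrix n m R}
    (h : ∀ i j, P i j * Q j i = -(Q j i * P i j)) :
    (P * Q).trace = -(Q * P).trace := by
  simp only [trace, diag_apply, mul_apply, h, Finset.sum_neg_distrib]
  rw [Finset.sum_comm]

theorem semiconjBy_scalar_iff {R n : Type*} [Semiring R] [Fintype n] [DecidableEq n] {a : R}
    {M N : Matrix n n R} :
    SemiconjBy (scalar n a) M N ↔ ∀ i j, SemiconjBy a (M i j) (N i j) := by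
  simp [SemiconjBy, ← Matrix.ext_iff]

variable {R n : Type*} [Ring R] [Fintype n] [DecidableEq n]

open scoped IsMulCommutative in
theorem matrix_pow_card_eq_zero_of_commute_of_trace_pow [IsAddTorsionFree R] {M : Matrix n n R}
    (hcomm : ∀ i j k l, Commute (M i j) (M k l)) (hM : ∀ k, (M ^ (k + 1)).trace = 0) :
    M ^ Fintype.card n = 0 := by
  let S := Subring.closure {a | ∃ i j, M i j = a}
  have : IsMulCommutative S := Subring.isMulCommutative_closure <| by
    rintro _ ⟨i, j, rfl⟩ _ ⟨k, l, rfl⟩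
    exact hcomm i j k l
  have : IsAddTorsionFree S := S.subtype_injective.isAddTorsionFree S.subtype.toAddMonoidHom
  let N : Matrix n n S := .of fun i j => ⟨M i j, Subring.subset_closure ⟨i, j, rfl⟩⟩
  have map_pow_N (k : ℕ) : M ^ k = (N ^ k).map S.subtype := (map_pow S.subtype.mapMatrix N k).symm
  have trace_pow_N (k : ℕ) : (N ^ (k + 1)).trace = 0 := by
    apply S.subtype_injective
    rw [AddMonoidHom.map_trace, ← map_pow_N, hM, map_zero]
  rw [map_pow_N, matrix_pow_card_eq_zero_of_trace_pow trace_pow_N, Matrix.map_zero _ (map_zero _)]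

theorem matrix_pow_two_mul_card_eq_zero_of_anticommute [IsAddTorsionFree R] {A : Matrix n n R}
    (hA : ∀ i j k l, A i j * A k l = -(A k l * A i j)) : A ^ (2 * Fintype.card n) = 0 := by
  have semiconj_pow (i j : n) (m : ℕ) : SemiconjBy (scalar n (A i j)) (A ^ m) ((-A) ^ m) := by
    refine SemiconjBy.pow_right (semiconjBy_scalar_iff.mpr fun k l => ?_) m
    rw [SemiconjBy, hA, neg_apply, neg_mul]
  have commute_sq (i j k l : n) : Commute (A i j) ((A ^ 2) k l) := by
    have h := semiconjBy_scalar_iff.mp (semiconj_pow i j 2) k l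
    rwa [neg_sq] at h
  have anticommute_odd (m : ℕ) (i j k l : n) :
      A i j * (A ^ (2 * m + 1)) k l = -((A ^ (2 * m + 1)) k l * A i j) := by
    have h := semiconjBy_scalar_iff.mp (semiconj_pow i j (2 * m + 1)) k l
    rwa [Odd.neg_pow ⟨m, rfl⟩, neg_apply, SemiconjBy, neg_mul] at h
  rw [pow_mul]
  apply matrix_pow_card_eq_zero_of_commute_of_trace_pow
  · intro i j k l
    refine (semiconjBy_scalar_iff.mp ?_ i j).symm
    exact SemiconjBy.pow_right (semiconjBy_scalar_iff.mpr fun i j => (commute_sq i j k l).symm) 2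
  · intro m
    have h := trace_mul_eq_neg_of_anticommute fun k l => anticommute_odd m k l l k
    rw [← pow_succ, ← pow_succ'] at h
    rw [← pow_mul]
    exact self_eq_neg.mp h

end Anticommuting

theorem map_standardPolynomial {R S : Type*} [Ring R] [Ring S] (f : R →+* S) {k : ℕ}
    (x : Fin k → R) : f (standardPolynomial x) = standardPolynomial fun i => f (x i) := by
  simp [standardPolynomial, map_list_prod, List.map_ofFn, Function.comp_def]

theorem standardPolynomial_eq_alternatization (R : Type*) {S : Type*} [CommRing R] [Ring S]
    [Algebra R S] {k : ℕ} (x : Fin k → S) :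
    standardPolynomial x = (MultilinearMap.mkPiAlgebraFin R k S).alternatization x := by
  simp [standardPolynomial, MultilinearMap.alternatization_apply, Units.smul_def]

theorem sum_pow_eq_sum_prod_ofFn {S : Type*} [Semiring S] {ι : Type*} [Fintype ι] (z : ι → S)
    (k : ℕ) : (∑ i, z i) ^ k = ∑ p : Fin k → ι, (List.ofFn fun i => z (p i)).prod := by
  classical
  rw [← MultilinearMap.mkPiAlgebraFin_apply_const (R := ℕ), MultilinearMap.map_sum]
  simp

theorem prod_ofFn_mul_of_commute {S : Type*} [Monoid S] {k : ℕ} {y e : Fin k → S}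
    (h : ∀ i j, Commute (y i) (e j)) :
    (List.ofFn fun i => y i * e i).prod = (List.ofFn y).prod * (List.ofFn e).prod := by
  induction k with
  | zero => simp
  | succ k ih =>
    have hc : Commute (e 0) (List.ofFn fun i : Fin k => y i.succ).prod :=
      Commute.list_prod_right _ _ <| by simpa using fun i : Fin k => (h i.succ 0).symm
    simp only [List.ofFn_succ, List.prod_cons, ih fun i j => h i.succ j.succ, mul_assoc]
    rw [← mul_assoc (e 0), hc.eq, mul_assoc]

theorem sum_pow_eq_standardPolynomial_mul {R M S : Type*} [CommRing R] [AddCommGroup M]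
    [Module R M] [Ring S] (f : ExteriorAlgebra R M →+* S) {k : ℕ} (y : Fin k → S) (v : Fin k → M)
    (h : ∀ i j, Commute (y i) (f (ExteriorAlgebra.ι R (v j)))) :
    (∑ i, y i * f (ExteriorAlgebra.ι R (v i))) ^ k =
      standardPolynomial y * f (ExteriorAlgebra.ιMulti R k v) := by
  have expand (p : Fin k → Fin k) :
      (List.ofFn fun i => y (p i) * f (ExteriorAlgebra.ι R (v (p i)))).prod =
        (List.ofFn fun i => y (p i)).prod * f (ExteriorAlgebra.ιMulti R k (v ∘ p)) := by
    rw [prod_ofFn_mul_of_commute fun i j => h (p i) (p j), ExteriorAlgebra.ιMulti_apply,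
      map_list_prod, List.map_ofFn]
    rfl
  rw [sum_pow_eq_sum_prod_ofFn, standardPolynomial, Finset.sum_mul]
  simp only [expand]
  symm
  refine Finset.sum_of_injOn (fun σ : Equiv.Perm (Fin k) => ⇑σ) DFunLike.coe_injective.injOn
    (by simp) ?_ ?_
  · intro p _ hp
    rw [AlternatingMap.map_eq_zero_of_not_injective, map_zero, mul_zero]
    intro hinj
    exact hp ⟨Equiv.ofBijective p (Finite.injective_iff_bijective.mp hinj.of_comp),
      by simp, rfl⟩
  · intro σ _
    rw [AlternatingMap.map_perm, Units.smul_def, map_zsmul, mul_smul_comm, smul_mul_assoc]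

theorem eq_zero_of_smul_ιMulti_basis {R M : Type*} [CommRing R] [AddCommGroup M] [Module R M]
    {k : ℕ} (b : Module.Basis (Fin k) R M) {c : R}
    (h : c • ExteriorAlgebra.ιMulti R k b = 0) : c = 0 := by
  have h' : c • exteriorPower.ιMulti R k b = 0 := Subtype.ext h
  simpa [b.det_self] using congrArg (exteriorPower.alternatingMapLinearEquiv b.det) h'

open ExteriorAlgebra in
theorem standardPolynomial_matrix_eq_zero_of_isAddTorsionFree {R n : Type*} [CommRing R]
    [IsAddTorsionFree R] [Fintype n] [DecidableEq n] {k : ℕ} (hk : 2 * Fintype.card n ≤ k)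
    (x : Fin k → Matrix n n R) : standardPolynomial x = 0 := by
  let b := Pi.basisFun R (Fin k)
  let Λ := ExteriorAlgebra R (Fin k → R)
  have : IsAddTorsionFree Λ :=
    b.ExteriorAlgebra.repr.injective.isAddTorsionFree b.ExteriorAlgebra.repr.toAddMonoidHom
  let A : Matrix n n Λ := ∑ i, (x i).map (algebraMap R Λ) * scalar n (ι R (b i))
  have A_apply (i j : n) : A i j = ι R (∑ m, x m i j • b m) := by
    simp [A, Matrix.sum_apply, ← Algebra.smul_def]
  have A_pow : A ^ k = 0 := pow_eq_zero_of_le hk <|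
    matrix_pow_two_mul_card_eq_zero_of_anticommute
      fun i j k l => by simpa only [A_apply] using eq_neg_of_add_eq_zero_left (ι_add_mul_swap _ _)
  have commute_scalar (i j : Fin k) :
      Commute ((x i).map (algebraMap R Λ)) (scalar n (ι R (b j))) :=
    (semiconjBy_scalar_iff.mpr fun a c => (Algebra.commutes (x i a c) (ι R (b j))).symm).symm
  rw [sum_pow_eq_standardPolynomial_mul (scalar n) _ _ commute_scalar] at A_pow
  ext i j
  apply eq_zero_of_smul_ιMulti_basis b
  have h := map_standardPolynomial (algebraMap R Λ).mapMatrix x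
  simp only [RingHom.mapMatrix_apply] at h
  rw [← h] at A_pow
  simpa [Algebra.smul_def] using congrFun₂ A_pow i j

theorem amitsur_levitski_general {R n : Type*} [CommRing R] [Fintype n] [DecidableEq n] {k : ℕ}
    (hk : 2 * Fintype.card n ≤ k) (x : Fin k → Matrix n n R) : standardPolynomial x = 0 := by
  rw [standardPolynomial_eq_alternatization R]
  suffices h : (MultilinearMap.mkPiAlgebraFin R k (Matrix n n R)).alternatization = 0 by
    rw [h, AlternatingMap.zero_apply]
  refine (stdBasis R n n).ext_alternating fun v _ => ?_
  have stdBasis_eq_map (i : Fin k) : stdBasis R n n (v i) =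
      (Int.castRingHom R).mapMatrix (Matrix.single (v i).1 (v i).2 1) := by
    rw [stdBasis_eq_single, RingHom.mapMatrix_apply, Matrix.map_single, map_one]
  simp only [stdBasis_eq_map]
  rw [← standardPolynomial_eq_alternatization, ← map_standardPolynomial,
    standardPolynomial_matrix_eq_zero_of_isAddTorsionFree hk, map_zero, AlternatingMap.zero_apply]

/-- **Amitsur–Levitski theorem**: the algebra of `n × n` matrices over any field `F`
satisfies the standard identity of degree `2n`. -/
theorem amitsur_levitski (F : Type*) [Field F] (n : ℕ)
    (x : Fin (2 * n) → Matrix (Fin n) (Fin n) F) :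
    standardPolynomial x = 0 :=
  amitsur_levitski_general (by simp) x
end

section
/- Let g be a finite-dimensional complex semisimple Lie algebra with Killing form used to identify g with g*, and let d : ∧g → ∧g be the Lie algebra cohomology coboundary operator. Then for any g-invariant element u of ∧g that lies in the image of d, one has u = 0; i.e. d(∧g) ∩ (∧g)^g = 0. -/
open ExteriorAlgebra

/-!
The coboundary and the operator `w ↦ -1/2 ∑ i, b' i ∧ ρ (b i) w` are antiderivations with the same
values on generators, so they are equal. The canonical tensor `∑ i, b i ⊗ b' i` is invariant, hence
`∑ i, ⁅b i, b' i⁆` is central and vanishes, and one may write `d w = -1/2 ∑ i, ρ (b i) (b' i ∧ w)`.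
Thus the image of `d` lies in `g • ∧g`.

It remains to see that `g • M` contains no nonzero invariants when `M` is a finite-dimensional
module. If `g` acts nontrivially, Cartan's criterion makes the trace form of `M` nonzero, and it is
nondegenerate on some nonzero ideal. The Casimir operator `C` of that ideal commutes with `g`, kills
the invariants, and has nonzero trace, so by Fitting's lemma a high power of `C` has nonzero range
meeting the invariants only in zero. Passing to the quotient by this range, one concludes by
induction on the dimension.
-/

/-- Two finite families of vectors, each spanning the module, which are dual to one another with
respect to a bilinear form. Spanning families rather than bases are required: linear independence
follows from duality. -/
structure IsDualPair {R M κ : Type*} [CommRing R] [AddCommGroup M] [Module R M] [DecidableEq κ]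
    (Φ : LinearMap.BilinForm R M) (b b' : κ → M) : Prop where
  apply_eq : ∀ i j, Φ (b i) (b' j) = if i = j then 1 else 0
  span_left : Submodule.span R (Set.range b) = ⊤
  span_right : Submodule.span R (Set.range b') = ⊤

namespace IsDualPair

section CommRing

variable {R M N κ : Type*} [CommRing R] [AddCommGroup M] [Module R M] [AddCommGroup N] [Module R N]
  [DecidableEq κ] {Φ : LinearMap.BilinForm R M} {b b' : κ → M}

theorem finite [Finite κ] (h : IsDualPair Φ b b') : Module.Finite R M :=
  ⟨h.span_left ▸ Submodule.fg_span (Set.finite_range b)⟩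

variable [Fintype κ]

theorem sum_smul_left (h : IsDualPair Φ b b') (x : M) : ∑ i, Φ x (b' i) • b i = x := by
  have hx : x ∈ Submodule.span R (Set.range b) := h.span_left ▸ Submodule.mem_top
  obtain ⟨c, rfl⟩ := (Submodule.mem_span_range_iff_exists_fun R).mp hx
  simp [h.apply_eq]

theorem sum_smul_right (h : IsDualPair Φ b b') (x : M) : ∑ i, Φ (b i) x • b' i = x := by
  have hx : x ∈ Submodule.span R (Set.range b') := h.span_right ▸ Submodule.mem_top
  obtain ⟨c, rfl⟩ := (Submodule.mem_span_range_iff_exists_fun R).mp hx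
  simp [h.apply_eq]

-- Invariance of the canonical tensor `∑ i, b i ⊗ b' i`, tested against bilinear maps.
theorem sum_lie_apply_add_apply_lie {L : Type*} [LieRing L] [LieRingModule L M]
    (h : IsDualPair Φ b b') (hΦ : Φ.lieInvariant L) (F : M →ₗ[R] M →ₗ[R] N) (x : L) :
    ∑ i, (F ⁅x, b i⁆ (b' i) + F (b i) ⁅x, b' i⁆) = 0 := by
  have hleft : ∑ i, F ⁅x, b i⁆ (b' i) = ∑ i, ∑ j, Φ ⁅x, b i⁆ (b' j) • F (b j) (b' i) :=
    Finset.sum_congr rfl fun i _ ↦ by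
      conv_lhs => rw [← h.sum_smul_left ⁅x, b i⁆]
      simp
  have hright : ∑ j, F (b j) ⁅x, b' j⁆ = ∑ j, ∑ i, Φ (b i) ⁅x, b' j⁆ • F (b j) (b' i) :=
    Finset.sum_congr rfl fun j _ ↦ by
      conv_lhs => rw [← h.sum_smul_right ⁅x, b' j⁆]
      simp
  rw [Finset.sum_add_distrib, hleft, hright, Finset.sum_comm (γ := κ), ← Finset.sum_add_distrib]
  simp [hΦ x]

theorem sum_lie_eq_zero {L : Type*} [LieRing L] [LieAlgebra R L] {Φ : LinearMap.BilinForm R L}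
    {b b' : κ → L} (h : IsDualPair Φ b b') (hΦ : Φ.lieInvariant L)
    (hL : LieAlgebra.center R L = ⊥) : ∑ i, ⁅b i, b' i⁆ = 0 := by
  rw [← LieSubmodule.mem_bot (R := R) (L := L), ← hL, LieModule.mem_maxTrivSubmodule]
  intro x
  rw [lie_sum]
  simpa using h.sum_lie_apply_add_apply_lie hΦ (LieModule.toEnd R L L : L →ₗ[R] Module.End R L) x

end CommRing

section Field

variable {K M κ : Type*} [Field K] [AddCommGroup M] [Module K M] [Finite κ] [DecidableEq κ]
  {Φ : LinearMap.BilinForm K M} {b b' : κ → M}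

theorem of_span_left (hdual : ∀ i j, Φ (b i) (b' j) = if i = j then 1 else 0)
    (hspan : Submodule.span K (Set.range b) = ⊤) : IsDualPair Φ b b' where
  apply_eq := hdual
  span_left := hspan
  span_right := by
    have := Fintype.ofFinite κ
    have hb : LinearIndependent K b :=
      .of_pairwise_dual_eq_zero_one b (fun i ↦ Φ.flip (b' i))
        (fun i j hij ↦ by simp [hdual, hij.symm]) (fun i ↦ by simp [hdual])
    have hb' : LinearIndependent K b' :=
      .of_pairwise_dual_eq_zero_one b' (fun i ↦ Φ (b i))
        (fun i j hij ↦ by simp [hdual, hij]) (fun i ↦ by simp [hdual])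
    let B := Module.Basis.mk hb hspan.ge
    have := B.finiteDimensional_of_finite
    exact hb'.span_eq_top_of_card_eq_finrank' (Module.finrank_eq_card_basis B).symm

theorem dualBasis (hΦ : Φ.Nondegenerate) (hsymm : Φ.IsSymm) (b : Module.Basis κ K M) :
    IsDualPair Φ b (Φ.dualBasis hΦ b) where
  apply_eq := Φ.apply_dualBasis_right hΦ hsymm b
  span_left := b.span_eq
  span_right := (Φ.dualBasis hΦ b).span_eq

end Field

end IsDualPair

open LieAlgebra LieModule

theorem derivedSeries_one_eq_top_of_isSemisimple {R L : Type*} [CommRing R] [LieRing L]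
    [LieAlgebra R L] [IsSemisimple R L] : derivedSeries R L 1 = ⊤ := by
  obtain ⟨E, hE⟩ := exists_isCompl (derivedSeries R L 1)
  have hlie : ⁅E, E⁆ = ⊥ := le_bot_iff.mp <|
    hE.disjoint (LieSubmodule.mono_lie le_top le_top) (LieSubmodule.lie_le_right E E)
  have : IsLieAbelian E := (LieSubmodule.lie_abelian_iff_lie_self_eq_bot E).mpr hlie
  rw [HasTrivialRadical.eq_bot_of_isSolvable E] at hE
  simpa using hE.sup_eq_top

theorem exists_lieSubmodule_isCompl_ker {R L M : Type*} [CommRing R] [LieRing L] [AddCommGroup M]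
    [Module R M] [LieRingModule L M] [ComplementedLattice (LieSubmodule R L M)]
    {Φ : LinearMap.BilinForm R M} (hsymm : LinearMap.IsSymm Φ) (hΦ : Φ.lieInvariant L) :
    ∃ N : LieSubmodule R L M, IsCompl N.toSubmodule (LinearMap.ker Φ) := by
  obtain ⟨N, hN⟩ := exists_isCompl (InvariantForm.orthogonal Φ hΦ ⊤)
  have hker : LinearMap.ker Φ = (InvariantForm.orthogonal Φ hΦ ⊤).toSubmodule := by
    ext x
    have hcomm (y : M) : Φ x y = Φ y x := hsymm.eq x y
    simp [LinearMap.BilinForm.mem_orthogonal_iff, LinearMap.ext_iff, hcomm]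
  exact ⟨N, hker ▸ LieSubmodule.isCompl_toSubmodule.mpr hN.symm⟩

section LieModule

variable {R L M : Type*} [CommRing R] [LieRing L] [LieAlgebra R L]
  [AddCommGroup M] [Module R M] [LieRingModule L M] [LieModule R L M]

theorem lie_lie_le_sup (I J : LieIdeal R L) (N : LieSubmodule R L M) :
    ⁅⁅I, J⁆, N⁆ ≤ ⁅I, ⁅J, N⁆⁆ ⊔ ⁅J, ⁅I, N⁆⁆ := by
  rw [LieSubmodule.lie_le_iff]
  intro z hz m hm
  rw [← LieSubmodule.mem_toSubmodule, LieSubmodule.lieIdeal_oper_eq_linear_span'] at hz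
  induction hz using Submodule.span_induction with
  | mem z hz =>
    obtain ⟨x, hx, y, hy, rfl⟩ := hz
    rw [lie_lie]
    exact sub_mem
      (LieSubmodule.mem_sup_left (LieSubmodule.lie_mem_lie hx (LieSubmodule.lie_mem_lie hy hm)))
      (LieSubmodule.mem_sup_right (LieSubmodule.lie_mem_lie hy (LieSubmodule.lie_mem_lie hx hm)))
  | zero => simp
  | add z w _ _ hz hw => simpa using add_mem hz hw
  | smul a z _ hz => simpa using SMulMemClass.smul_mem a hz

theorem lowerCentralSeries_succ_eq_one_of_perfect (hL : derivedSeries R L 1 = ⊤) (k : ℕ) :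
    lowerCentralSeries R L M (k + 1) = lowerCentralSeries R L M 1 := by
  induction k with
  | zero => rfl
  | succ k ih =>
    rw [LieModule.lowerCentralSeries_succ, ih]
    refine le_antisymm (LieSubmodule.lie_le_right _ _) ?_
    conv_lhs => rw [LieModule.lowerCentralSeries_succ, ← hL]
    simpa using lie_lie_le_sup (⊤ : LieIdeal R L) ⊤ (⊤ : LieSubmodule R L M)

theorem isTrivial_of_isNilpotent_of_perfect [LieModule.IsNilpotent L M]
    (hL : derivedSeries R L 1 = ⊤) : IsTrivial L M := by
  obtain ⟨k, hk⟩ := IsNilpotent.nilpotent R L M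
  rw [trivial_iff_lower_central_eq_bot R, ← lowerCentralSeries_succ_eq_one_of_perfect hL k]
  exact le_bot_iff.mp (hk ▸ antitone_lowerCentralSeries R L M k.le_succ)

theorem isTrivial_of_traceForm_eq_zero_of_perfect [CharZero R] [IsDomain R] [IsNoetherian R M]
    [Module.Free R M] (hL : derivedSeries R L 1 = ⊤) (h : traceForm R L M = 0) :
    IsTrivial L M := by
  have hnil := isNilpotent_derivedSeries_of_traceForm_eq_zero h
  rw [hL] at hnil
  have : LieModule.IsNilpotent L M := by
    rw [isNilpotent_iff_forall' (R := R)] at hnil ⊢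
    exact fun x ↦ hnil ⟨x, LieSubmodule.mem_top x⟩
  exact isTrivial_of_isNilpotent_of_perfect hL

theorem exists_lieSubmodule_disjoint_maxTrivSubmodule [IsNoetherian R M] {C : Module.End R M}
    (hcomm : ∀ x, Commute C (toEnd R L M x)) (hnil : ¬ IsNilpotent C)
    (htriv : ∀ m ∈ maxTrivSubmodule R L M, C m = 0) :
    ∃ P : LieSubmodule R L M, P ≠ ⊥ ∧ Disjoint P (maxTrivSubmodule R L M) := by
  obtain ⟨n, hn⟩ := C.eventually_disjoint_ker_pow_range_pow.exists_forall_of_atTop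
  let P : LieSubmodule R L M :=
    { LinearMap.range (C ^ (n + 1)) with
      lie_mem := by
        rintro x _ ⟨m, rfl⟩
        exact ⟨⁅x, m⁆, LinearMap.congr_fun ((hcomm x).pow_left (n + 1)) m⟩ }
  refine ⟨P, fun hP ↦ hnil ⟨n + 1, LinearMap.range_eq_bot.mp ?_⟩, ?_⟩
  · exact congrArg LieSubmodule.toSubmodule hP
  · rw [← LieSubmodule.disjoint_toSubmodule]
    refine (hn (n + 1) n.le_succ).symm.mono_right fun m hm ↦ ?_
    rw [LinearMap.mem_ker, pow_succ, Module.End.mul_apply, htriv m hm, map_zero]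

theorem disjoint_lowerCentralSeries_maxTrivSubmodule_of_quotient {P : LieSubmodule R L M} {k : ℕ}
    (hP : Disjoint P (maxTrivSubmodule R L M))
    (hquot : Disjoint (lowerCentralSeries R L (M ⧸ P) k) (maxTrivSubmodule R L (M ⧸ P))) :
    Disjoint (lowerCentralSeries R L M k) (maxTrivSubmodule R L M) := by
  rw [← LieSubmodule.disjoint_toSubmodule, Submodule.disjoint_def] at hP hquot ⊢
  intro m hlcs htriv
  refine hP m ((LieSubmodule.Quotient.mk_eq_zero P).mp (hquot _ ?_ fun x ↦ ?_)) htriv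
  · exact map_lowerCentralSeries_le k (LieSubmodule.Quotient.mk' P)
      (LieSubmodule.mem_map_of_mem hlcs)
  · rw [← LieModuleHom.map_lie, htriv x, map_zero]

end LieModule

section Casimir

variable {R L M κ : Type*} [CommRing R] [LieRing L] [LieAlgebra R L]
  [AddCommGroup M] [Module R M] [LieRingModule L M] [LieModule R L M] [Fintype κ]

variable (R M) in
/-- The Casimir operator on a Lie module defined by two finite families in the Lie algebra, usually
dual bases of an ideal for an invariant form. -/
noncomputable def casimir (b b' : κ → L) : Module.End R M :=
  ∑ i, toEnd R L M (b i) * toEnd R L M (b' i)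

theorem casimir_apply_of_mem_maxTrivSubmodule (b b' : κ → L) {m : M}
    (hm : m ∈ maxTrivSubmodule R L M) : casimir R M b b' m = 0 := by
  rw [mem_maxTrivSubmodule] at hm
  simp [casimir, hm]

theorem trace_casimir (b b' : κ → L) :
    LinearMap.trace R M (casimir R M b b') = ∑ i, traceForm R L M (b i) (b' i) := by
  simp [casimir, traceForm_apply_apply, Module.End.mul_eq_comp]

theorem IsDualPair.commute_casimir [DecidableEq κ] {J : LieIdeal R L}
    {Φ : LinearMap.BilinForm R J} {b b' : κ → J} (h : IsDualPair Φ b b') (hΦ : Φ.lieInvariant L)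
    (x : L) : Commute (casimir R M (fun i ↦ (b i : L)) (fun i ↦ (b' i : L))) (toEnd R L M x) := by
  let act : J →ₗ[R] Module.End R M := toEnd R J M
  have hact (y : J) : act ⁅x, y⁆ = toEnd R L M x * act y - act y * toEnd R L M x :=
    LinearMap.ext fun m ↦ lie_lie x (y : L) m
  have hinv : ∑ i, (act ⁅x, b i⁆ * act (b' i) + act (b i) * act ⁅x, b' i⁆) = 0 :=
    h.sum_lie_apply_add_apply_lie hΦ ((LinearMap.mul R (Module.End R M)).compl₁₂ act act) x
  have hcasimir : casimir R M (fun i ↦ (b i : L)) (fun i ↦ (b' i : L)) =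
      ∑ i, act (b i) * act (b' i) := rfl
  refine (sub_eq_zero.mp (Eq.trans ?_ hinv)).symm
  rw [hcasimir, Finset.mul_sum, Finset.sum_mul, ← Finset.sum_sub_distrib]
  refine Finset.sum_congr rfl fun i _ ↦ ?_
  rw [hact, hact]
  noncomm_ring

end Casimir

section Semisimple

variable (K L M : Type*) [Field K] [CharZero K] [LieRing L] [LieAlgebra K L]
  [FiniteDimensional K L] [IsSemisimple K L] [AddCommGroup M] [Module K M]
  [FiniteDimensional K M] [LieRingModule L M] [LieModule K L M]

theorem exists_commute_toEnd_not_isNilpotent (hM : ¬ IsTrivial L M) :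
    ∃ C : Module.End K M, (∀ x, Commute C (toEnd K L M x)) ∧ ¬ IsNilpotent C ∧
      ∀ m ∈ maxTrivSubmodule K L M, C m = 0 := by
  have hT : traceForm K L M ≠ 0 := fun hT ↦ hM <|
    isTrivial_of_traceForm_eq_zero_of_perfect derivedSeries_one_eq_top_of_isSemisimple hT
  obtain ⟨J, hJ⟩ := exists_lieSubmodule_isCompl_ker (traceForm_isSymm K L M)
    (traceForm_lieInvariant K L M)
  have : Nontrivial J := by
    rw [LieSubmodule.nontrivial_iff_ne_bot]
    rintro rfl
    exact hT (LinearMap.ker_eq_top.mp (by simpa using hJ.sup_eq_top))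
  let Φ : LinearMap.BilinForm K J := (traceForm K L M).domRestrict₁₂ J.toSubmodule J.toSubmodule
  have hΦ : Φ.Nondegenerate := (traceForm_isSymm K L M).nondegenerate_restrict_of_isCompl_ker hJ
  let b := Module.finBasis K J
  have hdual : IsDualPair Φ b (Φ.dualBasis hΦ b) :=
    .dualBasis hΦ ⟨fun x y ↦ traceForm_comm K L M x y⟩ b
  let C := casimir K M (fun i ↦ (b i : L)) (fun i ↦ (Φ.dualBasis hΦ b i : L))
  have htrace : LinearMap.trace K M C = Module.finrank K J := calc
    _ = ∑ i, Φ (b i) (Φ.dualBasis hΦ b i) := trace_casimir _ _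
    _ = Module.finrank K J := by simp [hdual.apply_eq]
  have hnil : ¬ IsNilpotent C := fun hC ↦ by
    have hzero := (LinearMap.isNilpotent_trace_of_isNilpotent hC).eq_zero
    rw [htrace] at hzero
    exact Module.finrank_pos.ne' (Nat.cast_eq_zero.mp hzero)
  exact ⟨C, hdual.commute_casimir fun x y z ↦ traceForm_lieInvariant K L M x y z, hnil,
    fun _ ↦ casimir_apply_of_mem_maxTrivSubmodule _ _⟩

theorem disjoint_lowerCentralSeries_one_maxTrivSubmodule :
    Disjoint (lowerCentralSeries K L M 1) (maxTrivSubmodule K L M) := by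
  induction h : Module.finrank K M using Nat.strong_induction_on generalizing M with
  | h n ih =>
    by_cases hM : IsTrivial L M
    · rw [(trivial_iff_lower_central_eq_bot K L M).mp hM]
      exact disjoint_bot_left
    obtain ⟨C, hcomm, hnil, htriv⟩ := exists_commute_toEnd_not_isNilpotent K L M hM
    obtain ⟨P, hP, hdisj⟩ := exists_lieSubmodule_disjoint_maxTrivSubmodule hcomm hnil htriv
    have hlt : Module.finrank K (M ⧸ P) < n := by
      have hpos : 0 < Module.finrank K P.toSubmodule :=
        Submodule.one_le_finrank_iff.mpr (by simpa using hP)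
      have hsum : Module.finrank K (M ⧸ P) + _ = _ := P.toSubmodule.finrank_quotient_add_finrank
      lia
    exact disjoint_lowerCentralSeries_maxTrivSubmodule_of_quotient hdisj (ih _ hlt (M ⧸ P) rfl)

end Semisimple

section Derivation

attribute [local instance] LieRing.ofAssociativeRing

/-- The Lie algebra of derivations of an associative algebra. Mathlib's `Derivation` is limited to
commutative algebras, hence does not apply to the exterior algebra. -/
def derivationSubalgebra (R A : Type*) [CommRing R] [Ring A] [Algebra R A] :
    LieSubalgebra R (Module.End R A) where
  carrier := {D | ∀ a b, D (a * b) = D a * b + a * D b}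
  add_mem' hD hE a b := by
    simp only [LinearMap.add_apply, hD a b, hE a b, add_mul, mul_add]
    abel
  zero_mem' a b := by simp
  smul_mem' r D hD a b := by simp [hD a b]
  lie_mem' {D E} hD hE a b := by
    rw [Set.mem_ofPred_eq] at hD hE
    simp only [LieRing.of_associative_ring_bracket, LinearMap.sub_apply, Module.End.mul_apply, hD,
      hE, map_add, sub_mul, mul_sub]
    abel

theorem mem_derivationSubalgebra {R A : Type*} [CommRing R] [Ring A] [Algebra R A]
    {D : Module.End R A} :
    D ∈ derivationSubalgebra R A ↔ ∀ a b, D (a * b) = D a * b + a * D b :=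
  Iff.rfl

theorem apply_algebraMap_of_mem_derivationSubalgebra {R A : Type*} [CommRing R] [Ring A]
    [Algebra R A] {D : Module.End R A} (hD : D ∈ derivationSubalgebra R A) (r : R) :
    D (algebraMap R A r) = 0 := by
  have hone : D 1 = 0 := by simpa using hD 1 1
  rw [Algebra.algebraMap_eq_smul_one, map_smul, hone, smul_zero]

variable {R M : Type*} [CommRing R] [AddCommGroup M] [Module R M]

theorem exteriorAlgebra_ext_of_mem_derivationSubalgebra {D E : Module.End R (ExteriorAlgebra R M)}
    (hD : D ∈ derivationSubalgebra R (ExteriorAlgebra R M))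
    (hE : E ∈ derivationSubalgebra R (ExteriorAlgebra R M))
    (hι : ∀ m, D (ι R m) = E (ι R m)) : D = E := by
  refine LinearMap.ext fun u ↦ ?_
  induction u using ExteriorAlgebra.induction with
  | algebraMap r => simp only [apply_algebraMap_of_mem_derivationSubalgebra, hD, hE]
  | ι m => exact hι m
  | mul u v hu hv => rw [hD, hE, hu, hv]
  | add u v hu hv => rw [map_add, map_add, hu, hv]

/-- The representation of `L` on the exterior algebra of an `L`-module given by derivations which
extend the action on generators. Linearity and compatibility with brackets are automatic, so the
input `ρ` is a bare function. -/
def exteriorAlgebraLieHom {L : Type*} [LieRing L] [LieAlgebra R L] [LieRingModule L M]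
    [LieModule R L M] (ρ : L → Module.End R (ExteriorAlgebra R M))
    (hρι : ∀ x m, ρ x (ι R m) = ι R ⁅x, m⁆)
    (hρ : ∀ x, ρ x ∈ derivationSubalgebra R (ExteriorAlgebra R M)) :
    L →ₗ⁅R⁆ Module.End R (ExteriorAlgebra R M) where
  toFun := ρ
  map_add' x y := exteriorAlgebra_ext_of_mem_derivationSubalgebra (hρ _) (add_mem (hρ x) (hρ y))
    fun m ↦ by simp [hρι]
  map_smul' a x := exteriorAlgebra_ext_of_mem_derivationSubalgebra (hρ _)
    (SMulMemClass.smul_mem a (hρ x)) fun m ↦ by simp [hρι]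
  map_lie' {x y} := exteriorAlgebra_ext_of_mem_derivationSubalgebra (hρ _)
    (LieSubalgebra.lie_mem _ (hρ x) (hρ y))
    fun m ↦ by simp [hρι, LieRing.of_associative_ring_bracket]

theorem antiderivation_apply_eq_smul_sum {κ : Type*} [Fintype κ]
    {d : ExteriorAlgebra R M →ₗ[R] ExteriorAlgebra R M} (hdone : d 1 = 0)
    (hdanti : ∀ m u, d (ι R m * u) = d (ι R m) * u - ι R m * d u)
    {y : κ → M} {D : κ → Module.End R (ExteriorAlgebra R M)}
    (hD : ∀ i, D i ∈ derivationSubalgebra R (ExteriorAlgebra R M)) {c : R}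
    (hdι : ∀ m, d (ι R m) = c • ∑ i, ι R (y i) * D i (ι R m)) (u : ExteriorAlgebra R M) :
    d u = c • ∑ i, ι R (y i) * D i u := by
  induction u using CliffordAlgebra.left_induction with
  | algebraMap r =>
    change d (algebraMap R (ExteriorAlgebra R M) r) =
      c • ∑ i, ι R (y i) * D i (algebraMap R (ExteriorAlgebra R M) r)
    simp only [apply_algebraMap_of_mem_derivationSubalgebra (hD _), mul_zero,
      Finset.sum_const_zero, smul_zero]
    rw [Algebra.algebraMap_eq_smul_one, map_smul, hdone, smul_zero]
  | add u v hu hv => simp only [map_add, hu, hv, mul_add, Finset.sum_add_distrib, smul_add]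
  | ι_mul u m hu =>
    have hswap (i : κ) : ι R m * (ι R (y i) * D i u) = -(ι R (y i) * (ι R m * D i u)) := by
      rw [← mul_assoc, ← mul_assoc, ← neg_mul, eq_neg_of_add_eq_zero_left (ι_add_mul_swap m (y i))]
    change d (ι R m * u) = c • ∑ i, ι R (y i) * D i (ι R m * u)
    simp only [hdanti, hu, hdι, mem_derivationSubalgebra.mp (hD _), mul_add,
      Finset.sum_add_distrib, smul_add, smul_mul_assoc, Finset.sum_mul, mul_smul_comm,
      Finset.mul_sum, hswap, Finset.sum_neg_distrib, smul_neg, sub_neg_eq_add, mul_assoc]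

theorem coboundary_inter_invariants_eq_zero_general
    {K L : Type*} [Field K] [CharZero K] [LieRing L] [LieAlgebra K L] [IsSemisimple K L]
    {Φ : LinearMap.BilinForm K L} (hΦ : Φ.lieInvariant L)
    {κ : Type*} [Fintype κ] [DecidableEq κ] {b b' : κ → L} (hdual : IsDualPair Φ b b')
    (ρ : L → Module.End K (ExteriorAlgebra K L))
    (hρι : ∀ x y : L, ρ x (ι K y) = ι K ⁅x, y⁆)
    (hρmul : ∀ x u v, ρ x (u * v) = ρ x u * v + u * ρ x v)
    (d : ExteriorAlgebra K L →ₗ[K] ExteriorAlgebra K L) {c : K}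
    (hdι : ∀ x : L, d (ι K x) = c • ∑ i, ι K (b' i) * ι K ⁅b i, x⁆)
    (hdone : d 1 = 0)
    (hdanti : ∀ (x : L) (u : ExteriorAlgebra K L),
      d (ι K x * u) = d (ι K x) * u - ι K x * d u)
    (u : ExteriorAlgebra K L) (hu : u ∈ LinearMap.range d)
    (hinv : ∀ x : L, ρ x u = 0) :
    u = 0 := by
  have : FiniteDimensional K L := hdual.finite
  have : FiniteDimensional K (ExteriorAlgebra K L) :=
    .of_basis (Module.finBasis K L).ExteriorAlgebra
  let φ := exteriorAlgebraLieHom ρ hρι hρmul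
  let _ : LieRingModule L (ExteriorAlgebra K L) := .compLieHom _ φ
  have : LieModule K L (ExteriorAlgebra K L) := .compLieHom _ φ
  have hρ (x : L) (v : ExteriorAlgebra K L) : ⁅x, v⁆ = ρ x v := rfl
  obtain ⟨w, rfl⟩ := hu
  have hd : d w = c • ∑ i, ⁅b i, ι K (b' i) * w⁆ := by
    rw [antiderivation_apply_eq_smul_sum hdone hdanti (fun i ↦ hρmul (b i))
      (by simpa only [hρι] using hdι)]
    simp only [hρ, hρmul, hρι, Finset.sum_add_distrib]
    rw [← Finset.sum_mul, ← map_sum, hdual.sum_lie_eq_zero hΦ (center_eq_bot K L), map_zero,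
      zero_mul, zero_add]
  have hlcs : d w ∈ lowerCentralSeries K L (ExteriorAlgebra K L) 1 := by
    rw [hd]
    exact SMulMemClass.smul_mem c (sum_mem fun i _ ↦
      LieSubmodule.lie_mem_lie (LieSubmodule.mem_top _) (LieSubmodule.mem_top _))
  exact Submodule.disjoint_def.mp (LieSubmodule.disjoint_toSubmodule.mpr
    (disjoint_lowerCentralSeries_one_maxTrivSubmodule K L _)) _ hlcs hinv

end Derivation

/-- For a finite-dimensional complex semisimple Lie algebra `g`, identified with its dual
via the Killing form (here via dual bases `b`, `b'`), every `g`-invariant element of the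
exterior algebra `∧g` lying in the image of the Chevalley–Eilenberg coboundary `d`
vanishes: `d(∧g) ∩ (∧g)^g = 0`.  Here `ρ` is the adjoint action of `g` on `∧g` (the
derivation extending `ad`), and `d` is the coboundary operator, characterized as the
antiderivation of degree `+1` whose value on degree-one elements is the image of the
transpose of the bracket under the Killing identification. -/
theorem coboundary_inter_invariants_eq_zero
    {L : Type*} [LieRing L] [LieAlgebra ℂ L] [Module.Finite ℂ L]
    [LieAlgebra.IsSemisimple ℂ L]
    {κ : Type*} [Fintype κ] [DecidableEq κ] (b b' : κ → L)
    (hdual : ∀ i j, killingForm ℂ L (b i) (b' j) = if i = j then 1 else 0)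
    (hbasis : Submodule.span ℂ (Set.range b) = ⊤)
    -- `ρ` is the adjoint action of `L` on the exterior algebra, extending `ad` by
    -- derivations:
    (ρ : L → Module.End ℂ (ExteriorAlgebra ℂ L))
    (hρι : ∀ x y : L, ρ x (ι ℂ y) = ι ℂ ⁅x, y⁆)
    (hρmul : ∀ x u v, ρ x (u * v) = ρ x u * v + u * ρ x v)
    (hρone : ∀ x, ρ x 1 = 0)
    -- `d` is the Chevalley–Eilenberg coboundary operator on `∧g ≅ ∧g*`:
    (d : ExteriorAlgebra ℂ L →ₗ[ℂ] ExteriorAlgebra ℂ L)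
    (hdι : ∀ x : L, d (ι ℂ x) = (-(1 / 2) : ℂ) • ∑ i, ι ℂ (b' i) * ι ℂ ⁅b i, x⁆)
    (hdone : d 1 = 0)
    (hdanti : ∀ (x : L) (u : ExteriorAlgebra ℂ L),
      d (ι ℂ x * u) = d (ι ℂ x) * u - ι ℂ x * d u)
    (u : ExteriorAlgebra ℂ L) (hu : u ∈ LinearMap.range d)
    (hinv : ∀ x : L, ρ x u = 0) :
    u = 0 := by
  exact coboundary_inter_invariants_eq_zero_general (LieModule.traceForm_lieInvariant ℂ L L)
    (.of_span_left hdual hbasis) ρ hρι hρmul d hdι hdone hdanti u hu hinv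
end

section
/- Let g be a complex reductive Lie algebra and x ∈ g. With g identified with g* via the Killing form, let dx ∈ ∧²g be the coboundary of x. If k is maximal such that (dx)^k ≠ 0, then dim [g, x] = 2k, and (dx)^k = c · w₁ ∧ ⋯ ∧ w_{2k} for some nonzero scalar c, where w₁, …, w_{2k} is a basis of [x, g]. -/
open ExteriorAlgebra LieAlgebra

/-!
Contracting a bivector `ω` with all linear forms gives a subspace of `V`; if `ω = ∑ᵢ uᵢ ∧ vᵢ` with
the `uᵢ`, `vᵢ` linearly independent, it is their span. Every bivector has such an expression,
because a linear relation among the `uᵢ`, `vᵢ` allows one of the summands to be absorbed into the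
others. If there are `n` summands, they commute and square to zero, so `ω ^ n` is `n!` times the
wedge of all the `uᵢ`, `vᵢ`, while `ω ^ (n + 1) = 0`; hence `n` is the maximal exponent.
By invariance of the bilinear form, contracting `dx` with the linear form dual to `y` gives
`⁅x, y⁆`, so for `ω = dx` the subspace is `[x, g]`.
-/

section NilpotentSums

variable {A : Type*} [Semiring A]

theorem add_pow_succ_of_mul_self_eq_zero {p s : A} (hp : p * p = 0) (hps : Commute p s) (n : ℕ) :
    (p + s) ^ (n + 1) = s ^ (n + 1) + (n + 1) • (p * s ^ n) := by
  induction n with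
  | zero => simp [add_comm]
  | succ n ih =>
    have hleft : p * (p * s ^ n) = 0 := by rw [← mul_assoc, hp, zero_mul]
    have hright : s * (p * s ^ n) = p * s ^ (n + 1) := by
      rw [← mul_assoc, ← hps.eq, mul_assoc, ← pow_succ']
    rw [pow_succ', ih, add_mul, mul_add, mul_add, mul_smul_comm, mul_smul_comm, hleft, hright,
      smul_zero, add_zero, ← pow_succ', succ_nsmul _ (n + 1)]
    abel

theorem sum_pow_succ_eq_zero_of_mul_self_eq_zero {n : ℕ} {p : Fin n → A}
    (hp : ∀ i, p i * p i = 0) (hcomm : ∀ i j, Commute (p i) (p j)) : (∑ i, p i) ^ (n + 1) = 0 := by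
  induction n with
  | zero => simp
  | succ n ih =>
    have htail := ih (fun i ↦ hp i.succ) fun i j ↦ hcomm i.succ j.succ
    rw [Fin.sum_univ_succ, add_pow_succ_of_mul_self_eq_zero (hp 0)
      (.sum_right _ _ _ fun i _ ↦ hcomm 0 i.succ), pow_succ _ (n + 1), htail]
    simp

theorem sum_pow_eq_factorial_smul_prod_of_mul_self_eq_zero {n : ℕ} {p : Fin n → A}
    (hp : ∀ i, p i * p i = 0) (hcomm : ∀ i j, Commute (p i) (p j)) :
    (∑ i, p i) ^ n = n.factorial • (List.ofFn p).prod := by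
  induction n with
  | zero => simp
  | succ n ih =>
    have hp' : ∀ i : Fin n, p i.succ * p i.succ = 0 := fun i ↦ hp i.succ
    have hcomm' : ∀ i j : Fin n, Commute (p i.succ) (p j.succ) := fun i j ↦ hcomm i.succ j.succ
    rw [Fin.sum_univ_succ, add_pow_succ_of_mul_self_eq_zero (hp 0)
        (.sum_right _ _ _ fun i _ ↦ hcomm 0 i.succ),
      sum_pow_succ_eq_zero_of_mul_self_eq_zero hp' hcomm', ih hp' hcomm', zero_add,
      List.ofFn_succ, List.prod_cons, mul_smul_comm, smul_smul, Nat.factorial_succ]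

end NilpotentSums

section Bivectors

variable {R V I : Type*} [CommRing R] [AddCommGroup V] [Module R V]

theorem ι_mul_ι_eq_neg_swap (u v : V) : ι R u * ι R v = -(ι R v * ι R u) :=
  eq_neg_of_add_eq_zero_left (ι_add_mul_swap u v)

theorem commute_ι_mul_ι_ι (u v w : V) : Commute (ι R u * ι R v) (ι R w) := by
  rw [Commute, SemiconjBy, mul_assoc, ι_mul_ι_eq_neg_swap v w, mul_neg, ← mul_assoc,
    ι_mul_ι_eq_neg_swap u w, neg_mul, neg_neg, mul_assoc]

theorem commute_ι_mul_ι_ι_mul_ι (u v u' v' : V) :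
    Commute (ι R u * ι R v) (ι R u' * ι R v') :=
  (commute_ι_mul_ι_ι u v u').mul_right (commute_ι_mul_ι_ι u v v')

theorem ι_mul_ι_mul_self_eq_zero (u v : V) : (ι R u * ι R v) * (ι R u * ι R v) = 0 := by
  rw [← mul_assoc, (commute_ι_mul_ι_ι u v u).eq, ← mul_assoc, ι_sq_zero, zero_mul, zero_mul]

theorem ι_add_smul_mul_ι_sub_smul (u v e : V) (a c : R) :
    ι R (u + c • e) * ι R (v - a • e) = ι R u * ι R v + ι R e * ι R (a • u + c • v) := by
  simp only [map_add, map_sub, map_smul, add_mul, mul_add, mul_sub, smul_mul_assoc, mul_smul_comm,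
    ι_sq_zero, smul_zero, ι_mul_ι_eq_neg_swap u e]
  module

theorem contractLeft_ι_mul_ι (d : Module.Dual R V) (u v : V) :
    CliffordAlgebra.contractLeft d (ι R u * ι R v) = ι R (d u • v - d v • u) := by
  rw [CliffordAlgebra.contractLeft_ι_mul, CliffordAlgebra.contractLeft_ι, ← Algebra.commutes,
    ← Algebra.smul_def, map_sub, map_smul, map_smul]

/-- The space of all contractions `d ⌋ ω` of `ω` with linear forms `d`, also called the support of
`ω` when `ω` is a bivector. Contractions are projected to degree one, which for a bivector loses
nothing. -/
noncomputable def contractionRange (ω : ExteriorAlgebra R V) : Submodule R V :=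
  LinearMap.range (ιInv ∘ₗ CliffordAlgebra.contractLeft.flip ω)

theorem mem_contractionRange {ω : ExteriorAlgebra R V} {y : V} :
    y ∈ contractionRange ω ↔
      ∃ d : Module.Dual R V, ιInv (CliffordAlgebra.contractLeft d ω) = y :=
  Iff.rfl

variable (R) in
/-- The bivector `∑ᵢ w (i, 0) ∧ w (i, 1)`. Pairs of vectors are encoded as one family on `I × Fin 2`
so that linear independence and span refer to all the vectors together. -/
noncomputable def wedgeSum [Fintype I] (w : I × Fin 2 → V) : ExteriorAlgebra R V :=
  ∑ i, ι R (w (i, 0)) * ι R (w (i, 1))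

theorem ιInv_contractLeft_wedgeSum [Fintype I] (d : Module.Dual R V) (w : I × Fin 2 → V) :
    ιInv (CliffordAlgebra.contractLeft d (wedgeSum R w)) =
      ∑ i, (d (w (i, 0)) • w (i, 1) - d (w (i, 1)) • w (i, 0)) := by
  simp only [wedgeSum, map_sum, contractLeft_ι_mul_ι, ι_leftInverse _]

/-- The enumeration `2 * i + s ↦ (i, s)` of the vectors of `n` pairs. Keeping the two members of
each pair adjacent avoids a sign in `wedgeSum_pow`. -/
def pairEquiv (n : ℕ) : Fin (2 * n) ≃ Fin n × Fin 2 :=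
  (finCongr (mul_comm 2 n)).trans finProdFinEquiv.symm

theorem ιMulti_comp_pairEquiv {n : ℕ} (w : Fin n × Fin 2 → V) :
    ιMulti R (2 * n) (w ∘ pairEquiv n) =
      (List.ofFn fun i ↦ ι R (w (i, 0)) * ι R (w (i, 1))).prod := by
  have hpair (i : Fin n) (s : Fin 2) (h : 2 * (i : ℕ) + s < 2 * n) :
      pairEquiv n ⟨2 * i + s, h⟩ = (i, s) := by
    rw [← Equiv.eq_symm_apply]
    ext
    simp [pairEquiv, add_comm]
  rw [ιMulti_apply, List.ofFn_mul', List.prod_flatten, List.map_ofFn]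
  congr 2
  ext i
  simp [hpair]

theorem wedgeSum_pow {n : ℕ} (w : Fin n × Fin 2 → V) :
    wedgeSum R w ^ n = n.factorial • ιMulti R (2 * n) (w ∘ pairEquiv n) := by
  rw [ιMulti_comp_pairEquiv, wedgeSum, sum_pow_eq_factorial_smul_prod_of_mul_self_eq_zero
    (fun _ ↦ ι_mul_ι_mul_self_eq_zero _ _) fun _ _ ↦ commute_ι_mul_ι_ι_mul_ι _ _ _ _]

theorem wedgeSum_pow_succ {n : ℕ} (w : Fin n × Fin 2 → V) : wedgeSum R w ^ (n + 1) = 0 :=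
  sum_pow_succ_eq_zero_of_mul_self_eq_zero (fun _ ↦ ι_mul_ι_mul_self_eq_zero _ _)
    fun _ _ ↦ commute_ι_mul_ι_ι_mul_ι _ _ _ _

theorem exists_eq_wedgeSum_of_mem_exteriorPower_two {ω : ExteriorAlgebra R V} (hω : ω ∈ ⋀[R]^2 V) :
    ∃ (n : ℕ) (w : Fin n × Fin 2 → V), ω = wedgeSum R w := by
  rw [← ιMulti_span_fixedDegree, Submodule.mem_span_set'] at hω
  obtain ⟨n, a, g, rfl⟩ := hω
  choose v hv using fun i ↦ (g i).2
  refine ⟨n, fun p ↦ ![a p.1 • v p.1 0, v p.1 1] p.2, ?_⟩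
  simp [wedgeSum, ← hv, ιMulti_apply, Matrix.vecTail]

theorem wedgeSum_rotate [Fintype I] (w : I × Fin 2 → V) :
    wedgeSum R (fun p : I × Fin 2 ↦ ![-w (p.1, 1), w (p.1, 0)] p.2) = wedgeSum R w := by
  refine Finset.sum_congr rfl fun i _ ↦ ?_
  simpa using (ι_mul_ι_eq_neg_swap (w (i, 0)) (w (i, 1))).symm

theorem exists_wedgeSum_eq_of_eq_sum {n : ℕ} (w : Fin (n + 1) × Fin 2 → V) (j : Fin (n + 1))
    (t : R) (a c : Fin n → R)
    (hj : w (j, 1) =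
      t • w (j, 0) + ∑ i, (a i • w (j.succAbove i, 0) + c i • w (j.succAbove i, 1))) :
    ∃ w' : Fin n × Fin 2 → V, wedgeSum R w' = wedgeSum R w := by
  refine ⟨fun p ↦ ![w (j.succAbove p.1, 0) + c p.1 • w (j, 0),
    w (j.succAbove p.1, 1) - a p.1 • w (j, 0)] p.2, ?_⟩
  have habsorb : ι R (w (j, 0)) * ι R (w (j, 1)) =
      ∑ i, ι R (w (j, 0)) * ι R (a i • w (j.succAbove i, 0) + c i • w (j.succAbove i, 1)) := by
    rw [hj, map_add, map_sum, mul_add, Finset.mul_sum, map_smul, mul_smul_comm, ι_sq_zero,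
      smul_zero, zero_add]
  rw [wedgeSum, wedgeSum, Fin.sum_univ_succAbove _ j, habsorb, ← Finset.sum_add_distrib]
  refine Finset.sum_congr rfl fun i _ ↦ ?_
  exact (ι_add_smul_mul_ι_sub_smul _ _ _ _ _).trans (add_comm _ _)

end Bivectors

section NormalForm

variable {K V : Type*} [Field K] [AddCommGroup V] [Module K V]

theorem exists_dual_apply_eq_of_linearIndependent {I : Type*} {w : I → V}
    (hw : LinearIndependent K w) (c : I → K) : ∃ d : Module.Dual K V, ∀ i, d (w i) = c i := by
  obtain ⟨d, hd⟩ := LinearMap.exists_extend ((Module.Basis.span hw).constr K c)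
  refine ⟨d, fun i ↦ ?_⟩
  have hi := LinearMap.congr_fun hd (Module.Basis.span hw i)
  rwa [Module.Basis.constr_basis, LinearMap.comp_apply, Submodule.subtype_apply,
    Module.Basis.span_apply] at hi

theorem ιMulti_ne_zero_of_linearIndependent {n : ℕ} {w : Fin n → V}
    (hw : LinearIndependent K w) : ιMulti K n w ≠ 0 := by
  choose f hf using fun j ↦ exists_dual_apply_eq_of_linearIndependent hw (Pi.single j 1)
  intro hzero
  have hpair := exteriorPower.pairingDual_ιMulti_ιMulti f w
  have hone : Matrix.of (fun i j ↦ f j (w i)) = 1 := by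
    ext i j
    simp [hf, Pi.single_apply, Matrix.one_apply]
  rw [hone, Matrix.det_one, Subtype.ext (a1 := exteriorPower.ιMulti K n w) (a2 := 0) hzero,
    map_zero] at hpair
  exact zero_ne_one hpair

theorem contractionRange_wedgeSum {I : Type*} [Fintype I] {w : I × Fin 2 → V}
    (hw : LinearIndependent K w) :
    contractionRange (wedgeSum K w) = Submodule.span K (Set.range w) := by
  apply le_antisymm
  · intro y hy
    obtain ⟨d, rfl⟩ := mem_contractionRange.1 hy
    rw [ιInv_contractLeft_wedgeSum]
    exact Submodule.sum_mem _ fun i _ ↦ Submodule.sub_mem _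
      (Submodule.smul_mem _ _ (Submodule.subset_span ⟨_, rfl⟩))
      (Submodule.smul_mem _ _ (Submodule.subset_span ⟨_, rfl⟩))
  · intro y hy
    obtain ⟨c, rfl⟩ := (Submodule.mem_span_range_iff_exists_fun K).1 hy
    obtain ⟨d, hd⟩ := exists_dual_apply_eq_of_linearIndependent hw
      fun p ↦ ![c (p.1, 1), -c (p.1, 0)] p.2
    refine mem_contractionRange.2 ⟨d, ?_⟩
    simp [ιInv_contractLeft_wedgeSum, hd, Fintype.sum_prod_type, Fin.sum_univ_two, add_comm]

theorem exists_wedgeSum_eq_of_relation {n : ℕ} (w : Fin (n + 1) × Fin 2 → V)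
    {g : Fin (n + 1) × Fin 2 → K} (hg : ∑ p, g p • w p = 0) {j : Fin (n + 1)}
    (hj : g (j, 1) ≠ 0) : ∃ w' : Fin n × Fin 2 → V, wedgeSum K w' = wedgeSum K w := by
  refine exists_wedgeSum_eq_of_eq_sum w j (-(g (j, 1))⁻¹ * g (j, 0))
    (fun i ↦ -(g (j, 1))⁻¹ * g (j.succAbove i, 0))
    (fun i ↦ -(g (j, 1))⁻¹ * g (j.succAbove i, 1)) ?_
  simp only [Fintype.sum_prod_type, Fin.sum_univ_two, Fin.sum_univ_succAbove _ j] at hg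
  simp only [mul_smul, ← smul_add, ← Finset.smul_sum]
  rw [neg_smul, ← smul_neg, eq_inv_smul_iff₀ hj, eq_neg_iff_add_eq_zero, ← hg]
  abel

theorem exists_wedgeSum_eq_of_not_linearIndependent {n : ℕ} {w : Fin (n + 1) × Fin 2 → V}
    (hw : ¬LinearIndependent K w) : ∃ w' : Fin n × Fin 2 → V, wedgeSum K w' = wedgeSum K w := by
  obtain ⟨g, hg, ⟨j, s⟩, hj⟩ := Fintype.not_linearIndependent_iff.1 hw
  fin_cases s
  · rw [← wedgeSum_rotate w]
    refine exists_wedgeSum_eq_of_relation _ (g := fun p ↦ ![-g (p.1, 1), g (p.1, 0)] p.2) ?_ hj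
    simpa [Fintype.sum_prod_type, Fin.sum_univ_two, add_comm] using hg
  · exact exists_wedgeSum_eq_of_relation w hg hj

theorem exists_linearIndependent_wedgeSum_eq {n : ℕ} (w : Fin n × Fin 2 → V) :
    ∃ (m : ℕ) (w' : Fin m × Fin 2 → V), LinearIndependent K w' ∧ wedgeSum K w' = wedgeSum K w := by
  induction n with
  | zero => exact ⟨0, w, linearIndependent_empty_type, rfl⟩
  | succ n ih =>
    by_cases hw : LinearIndependent K w
    · exact ⟨n + 1, w, hw, rfl⟩
    · obtain ⟨w', hw'⟩ := exists_wedgeSum_eq_of_not_linearIndependent hw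
      simpa only [hw'] using ih w'

theorem exists_pow_eq_smul_ιMulti_of_mem_exteriorPower_two [CharZero K] {ω : ExteriorAlgebra K V}
    (hω : ω ∈ ⋀[K]^2 V) {k : ℕ} (hk : ω ^ k ≠ 0) (hk1 : ω ^ (k + 1) = 0) :
    ∃ c : K, c ≠ 0 ∧ ∃ w : Fin (2 * k) → V, LinearIndependent K w ∧
      Submodule.span K (Set.range w) = contractionRange ω ∧ ω ^ k = c • ιMulti K (2 * k) w := by
  obtain ⟨_, w₀, rfl⟩ := exists_eq_wedgeSum_of_mem_exteriorPower_two hω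
  obtain ⟨n, w, hw, hw₀⟩ := exists_linearIndependent_wedgeSum_eq (K := K) w₀
  rw [← hw₀] at hk hk1 ⊢
  have hw' : LinearIndependent K (w ∘ pairEquiv n) := hw.comp _ (pairEquiv n).injective
  have hfac : (n.factorial : K) ≠ 0 := Nat.cast_ne_zero.2 n.factorial_ne_zero
  have hpow : wedgeSum K w ^ n = (n.factorial : K) • ιMulti K (2 * n) (w ∘ pairEquiv n) := by
    rw [wedgeSum_pow, Nat.cast_smul_eq_nsmul]
  have hne : wedgeSum K w ^ n ≠ 0 := by
    rw [hpow]
    exact smul_ne_zero hfac (ιMulti_ne_zero_of_linearIndependent hw')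
  obtain rfl : k = n := Nat.succ_injective <|
    (nilpotencyClass_eq_succ_iff.2 ⟨hk1, hk⟩).symm.trans
      (nilpotencyClass_eq_succ_iff.2 ⟨wedgeSum_pow_succ w, hne⟩)
  refine ⟨_, hfac, w ∘ pairEquiv k, hw', ?_, hpow⟩
  rw [(pairEquiv k).surjective.range_comp, contractionRange_wedgeSum hw]

end NormalForm

section DualFamilies

variable {R V κ : Type*} [CommRing R] [AddCommGroup V] [Module R V] [Fintype κ] [DecidableEq κ]
  {B : LinearMap.BilinForm R V} {b b' : κ → V}

theorem sum_apply_smul_eq_self_of_dual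
    (hdual : ∀ i j, B (b i) (b' j) = if i = j then 1 else 0)
    (hspan : Submodule.span R (Set.range b) = ⊤) (y : V) : ∑ i, B y (b' i) • b i = y := by
  have hy : y ∈ Submodule.span R (Set.range b) := hspan ▸ Submodule.mem_top
  obtain ⟨c, rfl⟩ := (Submodule.mem_span_range_iff_exists_fun R).1 hy
  simp [hdual]

theorem apply_sum_smul_of_dual (hB : B.IsSymm)
    (hdual : ∀ i j, B (b i) (b' j) = if i = j then 1 else 0)
    (hspan : Submodule.span R (Set.range b) = ⊤) (d : Module.Dual R V) :
    B (∑ i, d (b i) • b' i) = d := by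
  refine LinearMap.ext_on_range hspan fun j ↦ ?_
  rw [hB.eq]
  simp [hdual]

theorem sum_apply_smul_dual_eq_self (hB : B.IsSymm)
    (hdual : ∀ i j, B (b i) (b' j) = if i = j then 1 else 0)
    (hspan : Submodule.span R (Set.range b) = ⊤) (y : V) : ∑ i, B y (b i) • b' i = y := by
  have hinj : Function.Injective B := fun y z hyz ↦ by
    rw [← sum_apply_smul_eq_self_of_dual hdual hspan y, hyz,
      sum_apply_smul_eq_self_of_dual hdual hspan]
  exact hinj (apply_sum_smul_of_dual hB hdual hspan (B y))

end DualFamilies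

section Coboundary

variable {K L κ : Type*} [Field K] [LieRing L] [LieAlgebra K L] [Fintype κ]

variable (K) in
/-- The Chevalley–Eilenberg coboundary of `x`, as a bivector: `b` and `b'` are dual families for
the invariant form `B` that identifies the Lie algebra with its dual. The factor `-1 / 2` makes the
contraction with `B y` equal to `⁅x, y⁆`. -/
noncomputable def lieCoboundary (b b' : κ → L) (x : L) : ExteriorAlgebra K L :=
  (-(1 / 2) : K) • ∑ i, ι K (b' i) * ι K ⁅b i, x⁆

theorem lieCoboundary_mem_exteriorPower_two (b b' : κ → L) (x : L) :
    lieCoboundary K b b' x ∈ ⋀[K]^2 L := by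
  refine Submodule.smul_mem _ _ (Submodule.sum_mem _ fun i _ ↦ ?_)
  rw [exteriorPower, pow_two]
  exact Submodule.mul_mem_mul ⟨_, rfl⟩ ⟨_, rfl⟩

variable [DecidableEq κ] {B : LinearMap.BilinForm K L} {b b' : κ → L}

theorem contractLeft_lieCoboundary [NeZero (2 : K)] (hB : B.IsSymm) (hinv : B.lieInvariant L)
    (hdual : ∀ i j, B (b i) (b' j) = if i = j then 1 else 0)
    (hspan : Submodule.span K (Set.range b) = ⊤) (x y : L) :
    CliffordAlgebra.contractLeft (B y) (lieCoboundary K b b' x) = ι K ⁅x, y⁆ := by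
  have hleft : ∑ i, B y (b' i) • ⁅b i, x⁆ = -⁅x, y⁆ := by
    simp only [← smul_lie, ← sum_lie, sum_apply_smul_eq_self_of_dual hdual hspan, lie_skew]
  have hright : ∑ i, B y ⁅b i, x⁆ • b' i = ⁅x, y⁆ := by
    have happly (i : κ) : B y ⁅b i, x⁆ = B ⁅x, y⁆ (b i) := by
      rw [hinv, ← lie_skew, map_neg]
    simp only [happly, sum_apply_smul_dual_eq_self hB hdual hspan]
  have htwo : (2 : K) ≠ 0 := two_ne_zero
  simp only [lieCoboundary, map_smul, map_sum, contractLeft_ι_mul_ι]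
  rw [← map_sum, ← map_smul, Finset.sum_sub_distrib, hleft, hright]
  congr 1
  match_scalars
  field_simp
  norm_num

theorem contractionRange_lieCoboundary [NeZero (2 : K)] (hB : B.IsSymm) (hinv : B.lieInvariant L)
    (hdual : ∀ i j, B (b i) (b' j) = if i = j then 1 else 0)
    (hspan : Submodule.span K (Set.range b) = ⊤) (x : L) :
    contractionRange (lieCoboundary K b b' x) = LinearMap.range (ad K L x) := by
  have hcontr (y : L) : ιInv (CliffordAlgebra.contractLeft (B y) (lieCoboundary K b b' x)) =
      ⁅x, y⁆ := by
    rw [contractLeft_lieCoboundary hB hinv hdual hspan, ι_leftInverse]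
  ext z
  rw [mem_contractionRange, LinearMap.mem_range]
  constructor
  · rintro ⟨d, rfl⟩
    obtain ⟨y, rfl⟩ : ∃ y, B y = d := ⟨_, apply_sum_smul_of_dual hB hdual hspan d⟩
    exact ⟨y, (hcontr y).symm⟩
  · rintro ⟨y, rfl⟩
    exact ⟨B y, hcontr y⟩

theorem pow_coboundary_eq_wedge_of_centralizer_general [CharZero K] (hB : B.IsSymm)
    (hinv : B.lieInvariant L) (hdual : ∀ i j, B (b i) (b' j) = if i = j then 1 else 0)
    (hspan : Submodule.span K (Set.range b) = ⊤) (x : L) (k : ℕ)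
    (hk : lieCoboundary K b b' x ^ k ≠ 0) (hk1 : lieCoboundary K b b' x ^ (k + 1) = 0) :
    Module.finrank K (LinearMap.range (ad K L x)) = 2 * k ∧
    ∃ c : K, c ≠ 0 ∧ ∃ w : Fin (2 * k) → L,
      LinearIndependent K w ∧
      Submodule.span K (Set.range w) = LinearMap.range (ad K L x) ∧
      lieCoboundary K b b' x ^ k = c • (List.ofFn fun i ↦ ι K (w i)).prod := by
  obtain ⟨c, hc, w, hw, hrange, hpow⟩ := exists_pow_eq_smul_ιMulti_of_mem_exteriorPower_two
    (lieCoboundary_mem_exteriorPower_two b b' x) hk hk1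
  rw [contractionRange_lieCoboundary hB hinv hdual hspan] at hrange
  refine ⟨?_, c, hc, w, hw, hrange, hpow⟩
  rw [← hrange, finrank_span_eq_card hw, Fintype.card_fin]

end Coboundary

/-- Let `g` be a complex reductive Lie algebra identified with its dual via the Killing
form (via dual bases `b`, `b'`), and for `x ∈ g` let `dx ∈ ∧²g` be the Chevalley–Eilenberg
coboundary of `x`.  If `k` is maximal with `(dx)^k ≠ 0`, then `dim [g,x] = 2k` and
`(dx)^k = c · w₁ ∧ ⋯ ∧ w_{2k}` for some nonzero scalar `c` and some basis
`w₁, …, w_{2k}` of `[x, g]`. -/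
theorem pow_coboundary_eq_wedge_of_centralizer
    {L : Type*} [LieRing L] [LieAlgebra ℂ L] [Module.Finite ℂ L]
    (hred : LieAlgebra.radical ℂ L = LieAlgebra.center ℂ L)
    {κ : Type*} [Fintype κ] [DecidableEq κ] (b b' : κ → L)
    (hdual : ∀ i j, killingForm ℂ L (b i) (b' j) = if i = j then 1 else 0)
    (hbasis : Submodule.span ℂ (Set.range b) = ⊤)
    (x : L) (dx : ExteriorAlgebra ℂ L)
    (hdx : dx = (-(1 / 2) : ℂ) • ∑ i, ι ℂ (b' i) * ι ℂ ⁅b i, x⁆)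
    (k : ℕ) (hk : dx ^ k ≠ 0) (hk1 : dx ^ (k + 1) = 0) :
    Module.finrank ℂ (LinearMap.range ((ad ℂ L) x)) = 2 * k ∧
    ∃ (c : ℂ), c ≠ 0 ∧ ∃ w : Fin (2 * k) → L,
      LinearIndependent ℂ w ∧
      Submodule.span ℂ (Set.range w) = LinearMap.range ((ad ℂ L) x) ∧
      dx ^ k = c • (List.ofFn fun i => ι ℂ (w i)).prod := by
  subst hdx
  exact pow_coboundary_eq_wedge_of_centralizer_general ⟨LieModule.traceForm_comm ℂ L L⟩
    (LieModule.traceForm_lieInvariant ℂ L L) hdual hbasis x k hk hk1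
end

section
/- Let g be a finite-dimensional complex semisimple Lie algebra, ∧^k g its k-th exterior power with the adjoint action, and Cas the Casimir element of U(g) relative to the Killing form. Then every eigenvalue of the action of Cas on ∧^k g is at most k. -/
open ExteriorAlgebra

/-!
Casimir acts on an irreducible constituent of highest weight `χ` by `(χ, χ) + ∑_{α > 0} (α, χ)`,
and on `⋀^k L` every weight is the sum of a set `S` of at most `k` roots. Let `n(α, β)` be the
eigenvalue of `ad e_{-α} ∘ ad e_α` on the root vector `e_β`; root strings show that it is a
nonnegative rational number. Then `(α, β) = n(-α, β) - n(α, β)`, and the Killing form identity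
`tr (ad e_{-s} ∘ ad e_s) = 1` reads `(s, s) + ∑_α n(α, s) = 1`. Expanding the scalar for
`χ = ∑_{s ∈ S} s` reduces the bound by `|S|` to
`∑_{s ≠ t ∈ S} n(-s, t) ≤ 2 ∑_{s ∈ S} ∑_{α > 0} n(α, s)`. Here
`n(-s, t) = n(t - s, s) = n(s - t, t)` vanishes unless `t - s` is a root, and then one of `t - s`
and `s - t` is positive.
-/

namespace KostantCasimir

open LieAlgebra LieAlgebra.IsKilling LieModule

section DualPair

variable {K V M ι κ : Type*} [Field K] [AddCommGroup V] [Module K V] [AddCommGroup M] [Module K M]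
  [DecidableEq ι] [DecidableEq κ] {B : LinearMap.BilinForm K V} {b b' : ι → V} {d d' : κ → V}

/-- The families `b` and `b'` are dual bases of `V` with respect to the bilinear form `B`. Only
`b` is required to span. -/
structure IsDualPair (B : LinearMap.BilinForm K V) (b b' : ι → V) : Prop where
  apply_eq : ∀ i j, B (b i) (b' j) = if i = j then 1 else 0
  span_eq_top : Submodule.span K (Set.range b) = ⊤

namespace IsDualPair

lemma apply_linearCombination (h : IsDualPair B b b') (c : ι →₀ K) (i : ι) :
    B (Finsupp.linearCombination K b c) (b' i) = c i := by
  simp [Finsupp.linearCombination_apply, Finsupp.sum, h.apply_eq, eq_comm]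

lemma separatingLeft (h : IsDualPair B b b') : B.SeparatingLeft := fun x hx => by
  obtain ⟨c, rfl⟩ := Finsupp.mem_span_range_iff_exists_finsupp.1
    (h.span_eq_top.symm ▸ Submodule.mem_top : x ∈ Submodule.span K (Set.range b))
  have hc : c = 0 := Finsupp.ext fun i => (h.apply_linearCombination c i).symm.trans (hx _)
  rw [hc, Finsupp.sum_zero_index]

lemma linearIndependent (h : IsDualPair B b b') : LinearIndependent K b :=
  linearIndependent_iff.2 fun c hc => Finsupp.ext fun i => by
    rw [← h.apply_linearCombination, hc, map_zero, LinearMap.zero_apply, Finsupp.zero_apply]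

variable [Fintype ι] [Fintype κ]

lemma sum_apply_smul_left (h : IsDualPair B b b') (x : V) : ∑ i, B x (b' i) • b i = x := by
  obtain ⟨c, rfl⟩ := (Submodule.mem_span_range_iff_exists_fun K).1
    (h.span_eq_top.symm ▸ Submodule.mem_top : x ∈ Submodule.span K (Set.range b))
  simp [h.apply_eq]

lemma sum_apply_smul_right (h : IsDualPair B b b') (hB : B.IsSymm) (y : V) :
    ∑ i, B (b i) y • b' i = y := by
  refine sub_eq_zero.1 (h.separatingLeft _ fun z => ?_)
  rw [hB.eq, ← h.sum_apply_smul_left z]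
  simp [h.apply_eq]

lemma trace_eq_sum (h : IsDualPair B b b') (T : Module.End K V) :
    LinearMap.trace K V T = ∑ i, B (T (b i)) (b' i) := by
  let β := Module.Basis.mk h.linearIndependent h.span_eq_top.ge
  have hβ : ⇑β = b := Module.Basis.coe_mk _ _
  have repr_apply (x : V) (i : ι) : β.repr x i = B x (b' i) := by
    conv_lhs => rw [← h.sum_apply_smul_left x, ← hβ]
    simp [Finsupp.single_apply]
  simp [LinearMap.trace_eq_matrix_trace K β, Matrix.trace, LinearMap.toMatrix_apply, repr_apply, hβ]

lemma sum_map_left_eq_sum_map_right (hb : IsDualPair B b b') (hd : IsDualPair B d d')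
    (hB : B.IsSymm) {T T' : Module.End K V} (hT : LinearMap.IsAdjointPair B B T T')
    (F : V →ₗ[K] V →ₗ[K] M) :
    ∑ i, F (T (b i)) (b' i) = ∑ j, F (d j) (T' (d' j)) := by
  calc ∑ i, F (T (b i)) (b' i)
      = ∑ i, ∑ j, B (T (b i)) (d' j) • F (d j) (b' i) := by
        refine Finset.sum_congr rfl fun i _ => ?_
        conv_lhs => rw [← hd.sum_apply_smul_left (T (b i))]
        simp
    _ = ∑ j, F (d j) (∑ i, B (b i) (T' (d' j)) • b' i) := by
        rw [Finset.sum_comm]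
        simp [hT _ _]
    _ = ∑ j, F (d j) (T' (d' j)) := by simp [hb.sum_apply_smul_right hB]

lemma sum_eq_sum (hb : IsDualPair B b b') (hd : IsDualPair B d d') (hB : B.IsSymm)
    (F : V →ₗ[K] V →ₗ[K] M) : ∑ i, F (b i) (b' i) = ∑ j, F (d j) (d' j) :=
  hb.sum_map_left_eq_sum_map_right hd hB (T := .id) (T' := .id) (fun _ _ => rfl) F

end IsDualPair

lemma exists_isDualPair [FiniteDimensional K V] (hB : B.Nondegenerate) (hB' : B.IsSymm) :
    ∃ g g' : Fin (Module.finrank K V) → V, IsDualPair B g g' := by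
  let β := Module.finBasis K V
  exact ⟨β, LinearMap.BilinForm.dualBasis B hB β,
    LinearMap.BilinForm.apply_dualBasis_right hB hB' β, β.span_eq⟩

end DualPair

section Casimir

variable {K L M ι κ : Type*} [Field K] [LieRing L] [LieAlgebra K L]
  [AddCommGroup M] [Module K M] [LieRingModule L M] [LieModule K L M]
  [DecidableEq ι] [DecidableEq κ] {b b' : ι → L} {d d' : κ → L}

lemma isSymm_killingForm : (killingForm K L).IsSymm := ⟨LieModule.traceForm_comm K L L⟩

lemma isAdjointPair_killingForm_ad (x : L) :
    LinearMap.IsAdjointPair (killingForm K L) (killingForm K L) (ad K L x) (ad K L (-x)) :=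
  fun y z => by
    rw [map_neg, LinearMap.neg_apply, map_neg]
    exact LieModule.traceForm_apply_lie_apply' K L L x y z

lemma IsDualPair.isKilling (h : IsDualPair (killingForm K L) b b') : IsKilling K L where
  killingCompl_top_eq_bot := (LieSubmodule.eq_bot_iff _).2 fun x hx =>
    h.separatingLeft x fun y =>
      (isSymm_killingForm.eq x y).trans ((LieIdeal.mem_killingCompl K L ⊤).1 hx y trivial)

variable (K L M) in
/-- The bilinear map that sends `x` and `y` in `L` to the action of `x y`, an element of the
universal enveloping algebra, on the Lie module `M`. -/
def toEndMul : L →ₗ[K] L →ₗ[K] Module.End K M :=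
  (LinearMap.mul K (Module.End K M)).compl₁₂ (toEnd K L M : L →ₗ[K] Module.End K M)
    (toEnd K L M : L →ₗ[K] Module.End K M)

@[simp]
lemma toEndMul_apply (x y : L) : toEndMul K L M x y = toEnd K L M x * toEnd K L M y := rfl

variable [Fintype ι] [Fintype κ]

variable (K M) in
/-- The action on the Lie module `M` of the Casimir element `∑ᵢ bᵢ b'ᵢ` of the universal enveloping
algebra. -/
def casimir (b b' : ι → L) : Module.End K M := ∑ i, toEnd K L M (b i) * toEnd K L M (b' i)

lemma casimir_eq_casimir (hb : IsDualPair (killingForm K L) b b')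
    (hd : IsDualPair (killingForm K L) d d') : casimir K M b b' = casimir K M d d' := by
  simpa [casimir] using hb.sum_eq_sum hd isSymm_killingForm (toEndMul K L M)

lemma lie_casimir (h : IsDualPair (killingForm K L) b b') (x : L) (m : M) :
    ⁅x, casimir K M b b' m⁆ = casimir K M b b' ⁅x, m⁆ := by
  have invariance : ∑ i, ⁅⁅x, b i⁆, ⁅b' i, m⁆⁆ = -∑ i, ⁅b i, ⁅⁅x, b' i⁆, m⁆⁆ := by
    simpa using congr($(h.sum_map_left_eq_sum_map_right h isSymm_killingForm
      (isAdjointPair_killingForm_ad x) (toEndMul K L M)) m)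
  calc ⁅x, casimir K M b b' m⁆
      = ∑ i, ⁅⁅x, b i⁆, ⁅b' i, m⁆⁆ + ∑ i, ⁅b i, ⁅⁅x, b' i⁆, m⁆⁆
          + ∑ i, ⁅b i, ⁅b' i, ⁅x, m⁆⁆⁆ := by
        simp only [casimir, LinearMap.sum_apply, Module.End.mul_apply, toEnd_apply_apply, lie_sum,
          ← Finset.sum_add_distrib, leibniz_lie x, lie_add, add_assoc]
    _ = casimir K M b b' ⁅x, m⁆ := by
        rw [invariance, neg_add_cancel, zero_add]
        simp only [casimir, LinearMap.sum_apply, Module.End.mul_apply, toEnd_apply_apply]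

variable (M) in
/-- The eigenspaces of the Casimir operator, as Lie submodules. -/
def casimirEigenspace (h : IsDualPair (killingForm K L) b b') (c : K) : LieSubmodule K L M where
  __ := (casimir K M b b').eigenspace c
  lie_mem {x m} hm := by
    have hm : casimir K M b b' m = c • m := Module.End.mem_eigenspace_iff.1 hm
    exact Module.End.mem_eigenspace_iff.2 (by rw [← lie_casimir h, hm, lie_smul])

end Casimir

section Derivation

variable {R M : Type*} [CommRing R] [AddCommGroup M] [Module R M]
  {T T' : Module.End R M} {D D' : Module.End R (ExteriorAlgebra R M)}

/-- The linear endomorphism `D` of the exterior algebra of `M` is the derivation that extends the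
endomorphism `T` of `M`. -/
structure IsDerivationExtending (T : Module.End R M) (D : Module.End R (ExteriorAlgebra R M)) :
    Prop where
  map_ι : ∀ m, D (ι R m) = ι R (T m)
  map_mul : ∀ u v, D (u * v) = D u * v + u * D v

namespace IsDerivationExtending

lemma map_one (h : IsDerivationExtending T D) : D 1 = 0 := by
  simpa using h.map_mul 1 1

lemma unique (h : IsDerivationExtending T D) (h' : IsDerivationExtending T D') : D = D' := by
  refine LinearMap.ext fun u => ?_
  induction u using ExteriorAlgebra.induction with
  | algebraMap r => simp [Algebra.algebraMap_eq_smul_one, h.map_one, h'.map_one]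
  | ι m => rw [h.map_ι, h'.map_ι]
  | mul u v hu hv => rw [h.map_mul, h'.map_mul, hu, hv]
  | add u v hu hv => rw [map_add, map_add, hu, hv]

lemma add (h : IsDerivationExtending T D) (h' : IsDerivationExtending T' D') :
    IsDerivationExtending (T + T') (D + D') where
  map_ι m := by simp [h.map_ι, h'.map_ι]
  map_mul u v := by
    simp only [LinearMap.add_apply, h.map_mul, h'.map_mul, add_mul, mul_add]
    abel

lemma smul (h : IsDerivationExtending T D) (r : R) : IsDerivationExtending (r • T) (r • D) where
  map_ι m := by simp [h.map_ι]
  map_mul u v := by simp [h.map_mul]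

lemma lie (h : IsDerivationExtending T D) (h' : IsDerivationExtending T' D') :
    IsDerivationExtending ⁅T, T'⁆ ⁅D, D'⁆ where
  map_ι m := by simp [Ring.lie_def, h.map_ι, h'.map_ι]
  map_mul u v := by
    simp only [Ring.lie_def, LinearMap.sub_apply, Module.End.mul_apply, h.map_mul, h'.map_mul,
      map_add, sub_mul, mul_sub]
    abel

lemma apply_ιMulti (h : IsDerivationExtending T D) {n : ℕ} {v : Fin n → M} {μ : Fin n → R}
    (hv : ∀ i, T (v i) = μ i • v i) : D (ιMulti R n v) = (∑ i, μ i) • ιMulti R n v := by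
  induction n with
  | zero => simp [h.map_one]
  | succ n ih =>
    rw [ιMulti_succ_apply, h.map_mul, h.map_ι, hv, ih (v := Matrix.vecTail v) fun i => hv i.succ,
      Fin.sum_univ_succ]
    simp only [map_smul, smul_mul_assoc, mul_smul_comm, add_smul]

lemma map_mem_exteriorPower (h : IsDerivationExtending T D) {n : ℕ} {u : ExteriorAlgebra R M}
    (hu : u ∈ ⋀[R]^n M) : D u ∈ ⋀[R]^n M := by
  induction n generalizing u with
  | zero =>
    rw [exteriorPower, pow_zero] at hu ⊢
    obtain ⟨r, rfl⟩ := Submodule.mem_one.1 hu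
    simp [Algebra.algebraMap_eq_smul_one, h.map_one]
  | succ n ih =>
    rw [exteriorPower, pow_succ] at hu ⊢
    induction hu using Submodule.mul_induction_on' with
    | mem_mul_mem v hv w hw =>
      obtain ⟨m, rfl⟩ := hw
      rw [h.map_mul, h.map_ι]
      exact add_mem (Submodule.mul_mem_mul (ih hv) ⟨m, rfl⟩) (Submodule.mul_mem_mul hv ⟨T m, rfl⟩)
    | add v _ w _ hv hw => rw [map_add]; exact add_mem hv hw

section Weights

variable {I : Type*} [LinearOrder I] (β : Module.Basis I R M) {μ : I → R}

lemma apply_basis_exteriorPower (h : IsDerivationExtending T D) (hβ : ∀ i, T (β i) = μ i • β i)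
    {k : ℕ} (s : Set.powersetCard I k) :
    D (β.exteriorPower k s) = (∑ i ∈ s.1, μ i) • (β.exteriorPower k s : ExteriorAlgebra R M) := by
  let φ := Set.powersetCard.ofFinEmbEquiv.symm s
  have hφ : s.1 = Finset.univ.map φ.toEmbedding := by
    ext i
    simp only [Finset.mem_map, Finset.mem_univ, true_and]
    exact (Set.powersetCard.mem_range_ofFinEmbEquiv_symm_iff_mem s i).symm
  have hs : (β.exteriorPower k s : ExteriorAlgebra R M) = ιMulti R k (β ∘ φ) := by
    rw [exteriorPower.basis_apply]
    rfl
  rw [hs, h.apply_ιMulti (v := β ∘ φ) (μ := μ ∘ φ) fun i => hβ (φ i), hφ, Finset.sum_map]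
  rfl

lemma repr_exteriorPower_apply (h : IsDerivationExtending T D) (hβ : ∀ i, T (β i) = μ i • β i)
    {k : ℕ} (u : ⋀[R]^k M) (s : Set.powersetCard I k) :
    (β.exteriorPower k).repr ⟨D u, h.map_mem_exteriorPower u.2⟩ s =
      (∑ i ∈ s.1, μ i) * (β.exteriorPower k).repr u s := by
  let γ := β.exteriorPower k
  let Dk : Module.End R (⋀[R]^k M) := D.restrict fun _ => h.map_mem_exteriorPower
  suffices γ.coord s ∘ₗ Dk = (∑ i ∈ s.1, μ i) • γ.coord s from congr($this u)
  refine γ.ext fun t => ?_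
  have hDk : Dk (γ t) = (∑ i ∈ t.1, μ i) • γ t :=
    Subtype.ext (h.apply_basis_exteriorPower β hβ t)
  obtain rfl | hst := eq_or_ne t s <;> simp [*]

end Weights

lemma exists_card_eq_forall_eq_sum [IsDomain R] {I X : Type*} (β : Module.Basis I R M)
    {T : X → Module.End R M} {D : X → Module.End R (ExteriorAlgebra R M)}
    (h : ∀ x, IsDerivationExtending (T x) (D x)) {μ : I → X → R}
    (hβ : ∀ x i, T x (β i) = μ i x • β i) {k : ℕ} {u : ExteriorAlgebra R M} (hu : u ∈ ⋀[R]^k M)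
    (hu0 : u ≠ 0) {lam : X → R} (hlam : ∀ x, D x u = lam x • u) :
    ∃ s : Finset I, s.card = k ∧ ∀ x, lam x = ∑ i ∈ s, μ i x := by
  classical
  let _ : LinearOrder I := linearOrderOfSTO WellOrderingRel
  let γ := β.exteriorPower k
  obtain ⟨s, hs⟩ : ∃ s, γ.repr ⟨u, hu⟩ s ≠ 0 := by
    by_contra! hzero
    exact hu0 congr(($(γ.repr.map_eq_zero_iff.1 (Finsupp.ext hzero)) : ExteriorAlgebra R M))
  refine ⟨s.1, s.2, fun x => mul_right_cancel₀ hs ?_⟩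
  rw [← (h x).repr_exteriorPower_apply β (hβ x) ⟨u, hu⟩ s, ← smul_eq_mul, ← Finsupp.smul_apply,
    ← map_smul]
  exact congr(γ.repr $(Subtype.ext (hlam x).symm) s)

end IsDerivationExtending

end Derivation

section Combinatorics

variable {V R : Type*} [AddCommGroup V] [CommRing R] [LinearOrder R] [IsStrictOrderedRing R]
  {Φ S : Finset V} {f : V →+ R} {n : V → V → R}

lemma sum_eq_sum_pos_add_neg {A : Type*} [AddCommMonoid A] (hneg : ∀ α ∈ Φ, -α ∈ Φ)
    (hf : ∀ α ∈ Φ, f α ≠ 0) (g : V → A) :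
    ∑ α ∈ Φ, g α = ∑ α ∈ Φ with 0 < f α, (g α + g (-α)) := by
  rw [← Finset.sum_filter_add_sum_filter_not Φ (fun α => 0 < f α), Finset.sum_add_distrib]
  congr 1
  refine Finset.sum_nbij' Neg.neg Neg.neg ?_ ?_ (by simp) (by simp) (by simp)
  · simp only [Finset.mem_filter, map_neg, Left.neg_pos_iff, not_lt]
    exact fun α hα => ⟨hneg α hα.1, lt_of_le_of_ne hα.2 (hf α hα.1)⟩
  · simp only [Finset.mem_filter, map_neg, not_lt, Left.neg_nonpos_iff]
    exact fun α hα => ⟨hneg α hα.1, hα.2.le⟩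

variable [DecidableEq V]

lemma sum_pos_sub_le_sum_pos (hn : ∀ α β, 0 ≤ n α β) (s : V) :
    (∑ t ∈ S, if t - s ∈ Φ.filter (0 < f ·) then n (t - s) s else 0) ≤
      ∑ α ∈ Φ with 0 < f α, n α s := by
  rw [← Finset.sum_filter]
  calc ∑ t ∈ S with t - s ∈ Φ.filter (0 < f ·), n (t - s) s
      = ∑ α ∈ (S.filter (· - s ∈ Φ.filter (0 < f ·))).image (· - s), n α s :=
        (Finset.sum_image (f := (n · s)) fun _ _ _ _ => sub_left_inj.1).symm
    _ ≤ ∑ α ∈ Φ with 0 < f α, n α s := by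
        refine Finset.sum_le_sum_of_subset_of_nonneg ?_ fun α _ _ => hn α s
        exact Finset.image_subset_iff.2 fun t ht => (Finset.mem_filter.1 ht).2

lemma apply_neg_le_add (hf : ∀ α ∈ Φ, f α ≠ 0) (hn : ∀ α β, 0 ≤ n α β)
    (hzero : ∀ α β, α ∉ Φ → n α β = 0) {s t : V} (hst : n (-s) t = n (t - s) s)
    (hts : n (-s) t = n (s - t) t) :
    n (-s) t ≤ (if t - s ∈ Φ.filter (0 < f ·) then n (t - s) s else 0) +
      if s - t ∈ Φ.filter (0 < f ·) then n (s - t) t else 0 := by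
  by_cases hmem : t - s ∈ Φ
  · rcases (hf _ hmem).lt_or_gt with hlt | hgt
    · by_cases hmem' : s - t ∈ Φ
      · rw [← neg_sub, map_neg, Left.neg_neg_iff] at hlt
        rw [if_pos (Finset.mem_filter.2 ⟨hmem', hlt⟩), ← hts]
        split_ifs <;> simp [hn]
      · rw [hts, hzero _ _ hmem']
        split_ifs <;> simp [hn]
    · rw [if_pos (Finset.mem_filter.2 ⟨hmem, hgt⟩), ← hst]
      split_ifs <;> simp [hn]
  · rw [hst, hzero _ _ hmem]
    split_ifs <;> simp [hn]

lemma sum_sum_erase_le (hf : ∀ α ∈ Φ, f α ≠ 0) (hn : ∀ α β, 0 ≤ n α β)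
    (hzero : ∀ α β, α ∉ Φ → n α β = 0) (hsymm : ∀ s t, n (-s) t = n (-t) s)
    (hsub : ∀ s ∈ S, ∀ t ∈ S, s ≠ t → n (-s) t = n (t - s) s) :
    ∑ s ∈ S, ∑ t ∈ S.erase s, n (-s) t ≤ 2 * ∑ s ∈ S, ∑ α ∈ Φ with 0 < f α, n α s := by
  let A (s t : V) : R := if t - s ∈ Φ.filter (0 < f ·) then n (t - s) s else 0
  have hA (s t : V) : 0 ≤ A s t := by simp only [A]; split_ifs <;> simp [hn]
  calc ∑ s ∈ S, ∑ t ∈ S.erase s, n (-s) t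
      ≤ ∑ s ∈ S, ∑ t ∈ S.erase s, (A s t + A t s) := by
        refine Finset.sum_le_sum fun s hs => Finset.sum_le_sum fun t ht => ?_
        obtain ⟨hne, ht⟩ := Finset.mem_erase.1 ht
        exact apply_neg_le_add hf hn hzero (hsub s hs t ht hne.symm)
          (by rw [hsymm, hsub t ht s hs hne])
    _ ≤ ∑ s ∈ S, ∑ t ∈ S, (A s t + A t s) :=
        Finset.sum_le_sum fun s _ => Finset.sum_le_sum_of_subset_of_nonneg (S.erase_subset s)
          fun t _ _ => add_nonneg (hA s t) (hA t s)
    _ = 2 * ∑ s ∈ S, ∑ t ∈ S, A s t := by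
        simp only [Finset.sum_add_distrib]
        rw [Finset.sum_comm (f := fun s t => A t s), two_mul]
    _ ≤ 2 * ∑ s ∈ S, ∑ α ∈ Φ with 0 < f α, n α s := by
        gcongr with s
        exact sum_pos_sub_le_sum_pos hn s

omit [DecidableEq V] in
theorem sum_sub_add_sum_pos_sub_le_card (hneg : ∀ α ∈ Φ, -α ∈ Φ) (hf : ∀ α ∈ Φ, f α ≠ 0)
    (hn : ∀ α β, 0 ≤ n α β) (hzero : ∀ α β, α ∉ Φ → n α β = 0)
    (hsymm : ∀ s t, n (-s) t = n (-t) s)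
    (hsub : ∀ s ∈ S, ∀ t ∈ S, s ≠ t → n (-s) t = n (t - s) s)
    (hone : ∀ s ∈ S, n (-s) s + ∑ α ∈ Φ, n α s = 1) :
    ∑ s ∈ S, ∑ t ∈ S, (n (-s) t - n s t) +
      ∑ s ∈ S, ∑ α ∈ Φ with 0 < f α, (n (-α) s - n α s) ≤ S.card := by
  classical
  have sum_sum_le : ∑ s ∈ S, ∑ t ∈ S, (n (-s) t - n s t) ≤
      ∑ s ∈ S, n (-s) s + 2 * ∑ s ∈ S, ∑ α ∈ Φ with 0 < f α, n α s := by
    calc ∑ s ∈ S, ∑ t ∈ S, (n (-s) t - n s t)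
        ≤ ∑ s ∈ S, ∑ t ∈ S, n (-s) t := by
          gcongr with s _ t
          exact sub_le_self _ (hn s t)
      _ = ∑ s ∈ S, n (-s) s + ∑ s ∈ S, ∑ t ∈ S.erase s, n (-s) t := by
          rw [← Finset.sum_add_distrib]
          exact Finset.sum_congr rfl fun s hs => (Finset.add_sum_erase S _ hs).symm
      _ ≤ _ := by
          gcongr
          exact sum_sum_erase_le hf hn hzero hsymm hsub
  have sum_sum_pos_eq : ∑ s ∈ S, ∑ α ∈ Φ with 0 < f α, (n (-α) s - n α s) =
      S.card - ∑ s ∈ S, n (-s) s - 2 * ∑ s ∈ S, ∑ α ∈ Φ with 0 < f α, n α s := by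
    rw [Finset.cast_card, Finset.mul_sum, ← Finset.sum_sub_distrib, ← Finset.sum_sub_distrib]
    refine Finset.sum_congr rfl fun s hs => ?_
    rw [← hone s hs, sum_eq_sum_pos_add_neg hneg hf]
    simp only [Finset.sum_add_distrib, Finset.sum_sub_distrib]
    ring
  linarith

end Combinatorics

section Roots

variable {K L : Type*} [Field K] [LieRing L] [LieAlgebra K L] [FiniteDimensional K L]
  {H : LieSubalgebra K L} [H.IsCartanSubalgebra]

section DualForm

variable [IsKilling K L]

variable (H) in
/-- The bilinear form on the dual of `H` induced by the Killing form. -/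
noncomputable def dualForm : LinearMap.BilinForm K (Module.Dual K H) :=
  Module.Dual.eval K H ∘ₗ (cartanEquivDual H).symm.toLinearMap

lemma dualForm_apply (χ ψ : Module.Dual K H) :
    dualForm H χ ψ = ψ ((cartanEquivDual H).symm χ) := rfl

lemma traceForm_cartanEquivDual_symm (χ : Module.Dual K H) (h : H) :
    traceForm K H L ((cartanEquivDual H).symm χ) h = χ h :=
  congr($((cartanEquivDual H).apply_symm_apply χ) h)

lemma sum_mul_eq_dualForm {ι : Type*} [Fintype ι] [DecidableEq ι] {g g' : ι → H}
    (hg : IsDualPair (traceForm K H L) g g') (χ ψ : Module.Dual K H) :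
    ∑ i, χ (g i) * ψ (g' i) = dualForm H χ ψ := by
  conv_rhs => rw [dualForm_apply, ← hg.sum_apply_smul_right ⟨traceForm_comm K H L⟩
    ((cartanEquivDual H).symm χ)]
  simp [traceForm_comm K H L (g _), traceForm_cartanEquivDual_symm]

end DualForm

variable [CharZero K]

lemma toLinear_injective :
    Function.Injective (Weight.toLinear K H L : Weight K H L → Module.Dual K H) :=
  fun _ _ h => Weight.ext fun x => congr($h x)

lemma coe_toLinear_sub_toLinear (α β : Weight K H L) :
    ⇑(β.toLinear - α.toLinear) = (-1 : ℤ) • (α : H → K) + β := by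
  ext
  simp [sub_eq_neg_add]

variable (H) in
/-- The set of roots of `H`, as linear functionals. The inclusion of `LieSubalgebra.root`, whose
elements are bundled weights, makes sums of roots available. -/
noncomputable def rootFinset : Finset (Module.Dual K H) :=
  H.root.map ⟨Weight.toLinear K H L, toLinear_injective⟩

lemma toLinear_mem_rootFinset {α : Weight K H L} (hα : α.IsNonZero) :
    α.toLinear ∈ rootFinset H :=
  Finset.mem_map_of_mem _ (by simpa [LieSubalgebra.root] using hα)

lemma exists_toLinear_eq_of_mem_rootFinset {χ : Module.Dual K H} (hχ : χ ∈ rootFinset H) :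
    ∃ α : Weight K H L, α.IsNonZero ∧ α.toLinear = χ := by
  obtain ⟨α, hα, rfl⟩ := Finset.mem_map.1 hχ
  exact ⟨α, by simpa [LieSubalgebra.root] using hα, rfl⟩

lemma mem_rootFinset {χ : Module.Dual K H} : χ ∈ rootFinset H ↔ χ ≠ 0 ∧ rootSpace H χ ≠ ⊥ := by
  refine ⟨fun h => ?_, fun h => ?_⟩
  · obtain ⟨α, hα, rfl⟩ := exists_toLinear_eq_of_mem_rootFinset h
    exact ⟨Weight.coe_toLinear_ne_zero_iff.2 hα, α.genWeightSpace_ne_bot⟩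
  · let α : Weight K H L := ⟨χ, h.2⟩
    exact toLinear_mem_rootFinset (α := α) fun hα => h.1 (LinearMap.ext fun x => congr($hα x))

variable (H) in
lemma exists_addMonoidHom_rat_ne_zero :
    ∃ f : Module.Dual K H →+ ℚ, ∀ χ ∈ rootFinset H, f χ ≠ 0 := by
  obtain ⟨f, hf⟩ := Module.exists_dual_forall_apply_ne_zero (K := ℚ)
    (fun χ : rootFinset H => χ.1) fun χ => (mem_rootFinset.1 χ.2).1
  exact ⟨f.toAddMonoidHom, fun χ hχ => hf ⟨χ, hχ⟩⟩

/-- A choice of root vectors `e χ`, normalised so that opposite ones pair to `1`, and extended by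
`0` to all functionals `χ` that are not roots. -/
structure IsRootVectorSystem (e : Module.Dual K H → L) : Prop where
  mem_rootSpace : ∀ χ : Module.Dual K H, e χ ∈ rootSpace H χ
  killingForm_neg : ∀ χ ∈ rootFinset H, killingForm K L (e χ) (e (-χ)) = 1
  eq_zero : ∀ χ ∉ rootFinset H, e χ = 0

namespace IsRootVectorSystem

variable {e : Module.Dual K H → L} (he : IsRootVectorSystem e)
include he

lemma lie_mem_rootSpace (χ ψ : Module.Dual K H) :
    ⁅e χ, e ψ⁆ ∈ rootSpace H (χ + ψ : Module.Dual K H) :=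
  mapsTo_toEnd_genWeightSpace_add_of_mem_rootSpace K L H L χ ψ (he.mem_rootSpace χ)
    (he.mem_rootSpace ψ)

variable [IsTriangularizable K H L]

lemma killingForm_coe (h : H) (χ : Module.Dual K H) : killingForm K L h (e χ) = 0 := by
  obtain rfl | hχ := eq_or_ne χ 0
  · rw [he.eq_zero 0 fun h => (mem_rootFinset.1 h).1 rfl, map_zero]
  · refine killingForm_apply_eq_zero_of_mem_rootSpace_of_add_ne_zero K L H (α := 0) (by simp)
      (he.mem_rootSpace χ) ?_
    simpa using hχ

lemma killingForm_eq_ite [DecidableEq (Module.Dual K H)] {χ ψ : Module.Dual K H}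
    (hχ : χ ∈ rootFinset H) : killingForm K L (e χ) (e (-ψ)) = if χ = ψ then 1 else 0 := by
  split_ifs with h
  · rw [← h, he.killingForm_neg χ hχ]
  · refine killingForm_apply_eq_zero_of_mem_rootSpace_of_add_ne_zero K L H (he.mem_rootSpace χ)
      (he.mem_rootSpace (-ψ)) fun h' => h ?_
    exact add_neg_eq_zero.1 (DFunLike.coe_injective h')

end IsRootVectorSystem

variable [IsTriangularizable K H L] [IsKilling K L]

lemma neg_mem_rootFinset {χ : Module.Dual K H} (hχ : χ ∈ rootFinset H) : -χ ∈ rootFinset H := by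
  obtain ⟨α, hα, rfl⟩ := exists_toLinear_eq_of_mem_rootFinset hχ
  exact toLinear_mem_rootFinset (α := -α) (by simpa using hα)

lemma finrank_rootSpace_eq_one_of_mem_rootFinset {χ : Module.Dual K H} (hχ : χ ∈ rootFinset H) :
    Module.finrank K (rootSpace H χ) = 1 := by
  obtain ⟨α, hα, rfl⟩ := exists_toLinear_eq_of_mem_rootFinset hχ
  exact finrank_rootSpace_eq_one α hα

lemma exists_mem_rootSpace_killingForm_eq_one {χ : Module.Dual K H} (hχ : χ ∈ rootFinset H) :
    ∃ x ∈ rootSpace H χ, ∃ y ∈ rootSpace H (-χ), killingForm K L x y = 1 := by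
  obtain ⟨x, hx, hx0⟩ := Submodule.exists_mem_ne_zero_of_ne_bot
    (mt (LieSubmodule.toSubmodule_eq_bot _).1 (mem_rootFinset.1 hχ).2)
  obtain ⟨y, hy, hxy⟩ : ∃ y ∈ rootSpace H (-χ), killingForm K L x y ≠ 0 := by
    by_contra! hzero
    exact hx0 (by simpa using
      mem_ker_killingForm_of_mem_rootSpace_of_forall_rootSpace_neg K L H hx hzero)
  exact ⟨x, hx, (killingForm K L x y)⁻¹ • y, Submodule.smul_mem _ _ hy, by simp [hxy]⟩

variable (H) in
lemma exists_isRootVectorSystem : ∃ e : Module.Dual K H → L, IsRootVectorSystem e := by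
  classical
  obtain ⟨f, hf⟩ := exists_addMonoidHom_rat_ne_zero H
  choose! x hx y hy hxy using fun χ : Module.Dual K H => exists_mem_rootSpace_killingForm_eq_one
    (χ := χ)
  refine ⟨fun χ => if χ ∈ rootFinset H then if 0 < f χ then x χ else y (-χ) else 0,
    fun χ => ?_, fun χ hχ => ?_, fun χ hχ => if_neg hχ⟩
  · split_ifs with hχ
    · exact hx χ hχ
    · simpa using hy (-χ) (neg_mem_rootFinset hχ)
    · exact zero_mem _
  · have hχ' := neg_mem_rootFinset hχ
    rcases (hf χ hχ).lt_or_gt with hneg | hpos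
    · simpa [hχ, hχ', hneg, hneg.not_gt] using (traceForm_comm K L L _ _).trans (hxy _ hχ')
    · simpa [hχ, hχ', hpos, hpos.not_gt] using hxy χ hχ

namespace IsRootVectorSystem

variable {e : Module.Dual K H → L} (he : IsRootVectorSystem e)
include he

lemma lie_coe (h : H) (χ : Module.Dual K H) : ⁅(h : L), e χ⁆ = χ h • e χ :=
  lie_eq_smul_of_mem_rootSpace (he.mem_rootSpace χ) h

lemma killingForm_smul_eq {χ : Module.Dual K H} (hχ : χ ∈ rootFinset H) {y : L}
    (hy : y ∈ rootSpace H χ) : killingForm K L y (e (-χ)) • e χ = y := by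
  have heχ : (⟨e χ, he.mem_rootSpace χ⟩ : rootSpace H χ) ≠ 0 := fun h => by
    have heχ : e χ = 0 := congr(($h : L))
    simpa [heχ] using he.killingForm_neg χ hχ
  obtain ⟨c, hc⟩ := exists_smul_eq_of_finrank_eq_one
    (finrank_rootSpace_eq_one_of_mem_rootFinset hχ) heχ ⟨y, hy⟩
  obtain rfl : c • e χ = y := congr(($hc : L))
  rw [map_smul, LinearMap.smul_apply, he.killingForm_neg _ hχ, smul_eq_mul, mul_one]

lemma lie_neg {χ : Module.Dual K H} (hχ : χ ∈ rootFinset H) :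
    ⁅e χ, e (-χ)⁆ = ((cartanEquivDual H).symm χ : L) := by
  obtain ⟨α, -, rfl⟩ := exists_toLinear_eq_of_mem_rootFinset hχ
  rw [lie_eq_killingForm_smul_of_mem_rootSpace_of_mem_rootSpace_neg (he.mem_rootSpace α.toLinear)
    (he.mem_rootSpace (-α.toLinear)), he.killingForm_neg _ hχ, one_smul]

lemma isDualPair [DecidableEq (Module.Dual K H)] {ι : Type*} [DecidableEq ι]
    {g g' : ι → H} (hg : IsDualPair (traceForm K H L) g g') :
    IsDualPair (killingForm K L) (Sum.elim (fun i => (g i : L)) fun χ : rootFinset H => e χ)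
      (Sum.elim (fun i => (g' i : L)) fun χ : rootFinset H => e (-χ)) where
  apply_eq := by
    rintro (i | χ) (j | ψ)
    · exact (hg.apply_eq i j).trans (by simp)
    · exact he.killingForm_coe (g i) (-ψ)
    · exact (traceForm_comm K L L _ _).trans (he.killingForm_coe (g' j) χ)
    · exact (he.killingForm_eq_ite χ.2).trans (by simp only [Sum.inr.injEq, Subtype.ext_iff])
  span_eq_top := by
    have hsup := congr(($(cartan_sup_iSup_rootSpace_eq_top (K := K) (H := H)) : Submodule K L))
    simp only [LieSubmodule.sup_toSubmodule, LieSubmodule.iSup_toSubmodule,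
      LieSubmodule.top_toSubmodule] at hsup
    rw [eq_top_iff, ← hsup, Set.Sum.elim_range, Submodule.span_union]
    refine sup_le_sup (fun x hx => ?_) (iSup_le fun α => iSup_le fun hα x hx => ?_)
    · have hmem : (⟨x, hx⟩ : H) ∈ Submodule.span K (Set.range g) := hg.span_eq_top ▸ trivial
      have := Submodule.mem_map_of_mem (f := H.toSubmodule.subtype) hmem
      rwa [Submodule.map_span, ← Set.range_comp] at this
    · rw [← he.killingForm_smul_eq (toLinear_mem_rootFinset hα) hx]
      exact Submodule.smul_mem _ _ (Submodule.subset_span ⟨⟨_, toLinear_mem_rootFinset hα⟩, rfl⟩)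

end IsRootVectorSystem

end Roots

section StructureConstants

section Defs

variable {K L : Type*} [Field K] [LieRing L] [LieAlgebra K L] {H : LieSubalgebra K L}

/-- For a normalised system of root vectors, `normConst e χ ψ` is the eigenvalue on `e ψ` of
`ad (e (-χ)) ∘ ad (e χ)`, that is, the product of structure constants
`N_{χ, ψ} N_{-χ, χ + ψ}`. -/
noncomputable def normConst (e : Module.Dual K H → L) (χ ψ : Module.Dual K H) : K :=
  -killingForm K L ⁅e χ, e ψ⁆ ⁅e (-χ), e (-ψ)⁆

variable (e : Module.Dual K H → L) (χ ψ : Module.Dual K H)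

lemma normConst_self : normConst e χ χ = 0 := by simp [normConst]

lemma normConst_comm : normConst e χ ψ = normConst e ψ χ := by
  rw [normConst, normConst, ← lie_skew (e χ), ← lie_skew (e (-χ)), map_neg, map_neg,
    LinearMap.neg_apply, neg_neg]

lemma normConst_neg_neg : normConst e (-χ) (-ψ) = normConst e χ ψ := by
  simp only [normConst, neg_neg, traceForm_comm K L L ⁅e (-χ), _⁆]

lemma normConst_neg_left_comm : normConst e (-χ) ψ = normConst e (-ψ) χ := by
  rw [normConst_comm, ← normConst_neg_neg, neg_neg]

end Defs

variable {K L : Type*} [Field K] [LieRing L] [LieAlgebra K L] [FiniteDimensional K L] [CharZero K]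
  {H : LieSubalgebra K L} [H.IsCartanSubalgebra] {e : Module.Dual K H → L}
  {χ ψ : Module.Dual K H}

namespace IsRootVectorSystem

lemma normConst_eq_zero_of_notMem (he : IsRootVectorSystem e) (hχ : χ ∉ rootFinset H) :
    normConst e χ ψ = 0 := by
  simp [normConst, he.eq_zero χ hχ]

lemma lie_eq_zero (he : IsRootVectorSystem e) (h0 : χ + ψ ≠ 0) (h : χ + ψ ∉ rootFinset H) :
    ⁅e χ, e ψ⁆ = 0 := by
  have hbot : rootSpace H (χ + ψ : Module.Dual K H) = ⊥ := by
    by_contra hbot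
    exact h (mem_rootFinset.2 ⟨h0, hbot⟩)
  simpa [hbot] using he.lie_mem_rootSpace χ ψ

variable [IsTriangularizable K H L] [IsKilling K L] (he : IsRootVectorSystem e)
include he

lemma normConst_neg_left_eq (hψ : ψ ∈ rootFinset H) (hne : χ ≠ ψ) :
    normConst e (-χ) ψ = normConst e (ψ - χ) χ := by
  by_cases hsub : ψ - χ ∈ rootFinset H
  · have lie_left : killingForm K L ⁅e (-χ), e ψ⁆ (e (-(ψ - χ))) • e (ψ - χ) = ⁅e (-χ), e ψ⁆ :=
      he.killingForm_smul_eq hsub (by simpa [sub_eq_neg_add] using he.lie_mem_rootSpace (-χ) ψ)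
    have lie_right : killingForm K L ⁅e (ψ - χ), e χ⁆ (e (-ψ)) • e ψ = ⁅e (ψ - χ), e χ⁆ :=
      he.killingForm_smul_eq hψ (by simpa using he.lie_mem_rootSpace (ψ - χ) χ)
    rw [normConst, normConst, ← lie_left, ← lie_right]
    simp only [map_smul, LinearMap.smul_apply, smul_eq_mul, neg_neg]
    rw [traceForm_apply_lie_apply K L L (e (ψ - χ)), traceForm_apply_lie_apply' K L L (e (-χ)),
      ← lie_skew (e (-χ)), map_neg, neg_neg]
    ring
  · rw [he.normConst_eq_zero_of_notMem hsub, normConst, he.lie_eq_zero]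
    · simp
    · simpa [neg_add_eq_zero] using hne
    · rwa [neg_add_eq_sub]

lemma dualForm_eq_sub (hχ : χ ∈ rootFinset H) (hψ : ψ ∈ rootFinset H) :
    dualForm H χ ψ = normConst e (-χ) ψ - normConst e χ ψ := by
  calc dualForm H χ ψ = killingForm K L ⁅⁅e χ, e (-χ)⁆, e ψ⁆ (e (-ψ)) := by
        rw [he.lie_neg hχ, he.lie_coe, map_smul, LinearMap.smul_apply, he.killingForm_neg ψ hψ,
          smul_eq_mul, mul_one, dualForm_apply]
    _ = normConst e (-χ) ψ - normConst e χ ψ := by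
        rw [lie_lie, map_sub, LinearMap.sub_apply, traceForm_apply_lie_apply' K L L (e χ),
          traceForm_apply_lie_apply' K L L (e (-χ)) ⁅e χ, _⁆, normConst, normConst, neg_neg]

lemma normConst_eq_sub_dualForm (hχ : χ ∈ rootFinset H) (hψ : ψ ∈ rootFinset H) (hne : χ ≠ ψ) :
    normConst e χ ψ = normConst e χ (ψ - χ) - dualForm H χ ψ := by
  rw [he.dualForm_eq_sub hχ hψ, he.normConst_neg_left_eq hψ hne, normConst_comm e (ψ - χ),
    sub_sub_cancel]

lemma dualForm_self_add_sum_normConst (hχ : χ ∈ rootFinset H) :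
    dualForm H χ χ + ∑ ψ ∈ rootFinset H, normConst e ψ χ = 1 := by
  classical
  obtain ⟨g, g', hg⟩ := exists_isDualPair (traceForm_cartan_nondegenerate K L H)
    ⟨traceForm_comm K H L⟩
  have apply_cartan (h h' : H) : killingForm K L ⁅e (-χ), ⁅e χ, (h : L)⁆⁆ h' = χ h * χ h' := by
    rw [← lie_skew (e χ), he.lie_coe, ← smul_neg, lie_smul, _root_.lie_neg, lie_skew, he.lie_neg hχ,
      map_smul, LinearMap.smul_apply, smul_eq_mul]
    exact congr(χ h * $(traceForm_cartanEquivDual_symm χ h'))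
  have apply_root (ψ : Module.Dual K H) :
      killingForm K L ⁅e (-χ), ⁅e χ, e ψ⁆⁆ (e (-ψ)) = normConst e ψ χ := by
    rw [traceForm_apply_lie_apply', normConst_comm, normConst]
  calc dualForm H χ χ + ∑ ψ ∈ rootFinset H, normConst e ψ χ
      = LinearMap.trace K L (ad K L (e (-χ)) ∘ₗ ad K L (e χ)) := by
        rw [(he.isDualPair hg).trace_eq_sum, Fintype.sum_sum_type]
        simp only [LinearMap.comp_apply, ad_apply, Sum.elim_inl, Sum.elim_inr, apply_cartan,
          apply_root, sum_mul_eq_dualForm hg]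
        rw [Finset.sum_coe_sort (rootFinset H) fun ψ => normConst e ψ χ]
    _ = killingForm K L (e (-χ)) (e (-(-χ))) := by rw [killingForm_apply_apply, neg_neg]
    _ = 1 := he.killingForm_neg _ (neg_mem_rootFinset hχ)

end IsRootVectorSystem

end StructureConstants

section Positivity

variable {K L : Type*} [Field K] [LieRing L] [LieAlgebra K L] [FiniteDimensional K L] [CharZero K]
  {H : LieSubalgebra K L} [H.IsCartanSubalgebra] [IsTriangularizable K H L] [IsKilling K L]
  {α β : Weight K H L}

lemma dualForm_eq_mul_chainBotCoeff_sub_chainTopCoeff (hα : α.IsNonZero) :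
    dualForm H α.toLinear β.toLinear =
      dualForm H α.toLinear α.toLinear / 2 * (chainBotCoeff α β - chainTopCoeff α β) := by
  have hαα : dualForm H α.toLinear α.toLinear ≠ 0 := root_apply_cartanEquivDual_symm_ne_zero hα
  have apply_coroot : β (coroot α) =
      2 * (dualForm H α.toLinear α.toLinear)⁻¹ * dualForm H α.toLinear β.toLinear := by
    rw [← Weight.toLinear_apply, coroot, map_nsmul, map_smul, smul_eq_mul, nsmul_eq_mul, mul_assoc]
    rfl
  have := apply_coroot.symm.trans (apply_coroot_eq_cast α β)
  push_cast at this
  rw [← this]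
  field_simp

lemma exists_rat_dualForm_self_eq (hα : α.IsNonZero) :
    ∃ q : ℚ, 0 < q ∧ dualForm H α.toLinear α.toLinear = q := by
  set a := dualForm H α.toLinear α.toLinear
  have ha : a ≠ 0 := root_apply_cartanEquivDual_symm_ne_zero hα
  let r : ℚ := ∑ γ ∈ H.root, ((chainBotCoeff α γ - chainTopCoeff α γ : ℤ) : ℚ) ^ 2
  have hr : 4 / a = r := by
    calc 4 / a = traceForm K H L (coroot α) (coroot α) := by
          rw [traceForm_coroot, root_apply_coroot hα, nsmul_eq_mul, smul_eq_mul]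
          change 4 / a = _ * (a⁻¹ * 2)
          ring
      _ = ∑ γ ∈ H.root, γ (coroot α) ^ 2 := by
          refine congr($restrict_killingForm_eq_sum (coroot α) (coroot α)).trans ?_
          simp [LinearMap.sum_apply, pow_two]
      _ = r := by simp [r, apply_coroot_eq_cast]
  have hr0 : r ≠ 0 := fun h => by simp [h, ha] at hr
  refine ⟨4 / r, div_pos four_pos (lt_of_le_of_ne (Finset.sum_nonneg fun _ _ => sq_nonneg _)
    hr0.symm), ?_⟩
  rw [Rat.cast_div, Rat.cast_ofNat, ← hr, div_div_cancel₀ (by norm_num)]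

lemma chainTopCoeff_self (hα : α.IsNonZero) : chainTopCoeff α α = 0 := by
  have h := (rootSpace_zsmul_add_ne_bot_iff α α hα 1).not
  rw [one_zsmul, ← two_nsmul, rootSpace_two_smul α hα] at h
  by_contra h0
  exact h.1 (by simp) ⟨by omega, by omega⟩

theorem IsRootVectorSystem.normConst_eq {e : Module.Dual K H → L} (he : IsRootVectorSystem e)
    (hα : α.IsNonZero) (hβ : β.IsNonZero) :
    normConst e α.toLinear β.toLinear = dualForm H α.toLinear α.toLinear / 2 *
      (chainTopCoeff α β * (chainBotCoeff α β + 1)) := by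
  obtain rfl | hαβ := eq_or_ne α β
  · simp [normConst_self, chainTopCoeff_self hα]
  induction hp : chainBotCoeff α β generalizing β with
  | zero =>
    have hmem : β.toLinear - α.toLinear ∉ rootFinset H := fun hmem => by
      have := (mem_rootFinset.1 hmem).2
      rw [coe_toLinear_sub_toLinear, rootSpace_zsmul_add_ne_bot_iff α β hα] at this
      omega
    rw [he.normConst_eq_sub_dualForm (toLinear_mem_rootFinset hα) (toLinear_mem_rootFinset hβ)
      (toLinear_injective.ne hαβ), dualForm_eq_mul_chainBotCoeff_sub_chainTopCoeff hα,
      normConst_comm, he.normConst_eq_zero_of_notMem hmem, hp]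
    push_cast
    ring
  | succ p ih =>
    let γ : Weight K H L :=
      ⟨_, (rootSpace_zsmul_add_ne_bot_iff α β hα (-1)).2 ⟨by omega, by omega⟩⟩
    have hγ : γ.toLinear = β.toLinear - α.toLinear :=
      DFunLike.coe_injective (coe_toLinear_sub_toLinear α β).symm
    have hγ0 : γ.IsNonZero := by
      rw [← Weight.coe_toLinear_ne_zero_iff, hγ, sub_ne_zero]
      exact (toLinear_injective.ne hαβ).symm
    have hbot : chainBotCoeff α γ = p := by
      have := chainBotCoeff_of_eq_zsmul_add α β hα γ (-1) rfl
      omega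
    have htop : chainTopCoeff α γ = chainTopCoeff α β + 1 := by
      have := chainTopCoeff_of_eq_zsmul_add α β hα γ (-1) rfl
      omega
    have hαγ : α ≠ γ := fun h => by simp [← h, chainTopCoeff_self hα] at htop
    rw [he.normConst_eq_sub_dualForm (toLinear_mem_rootFinset hα) (toLinear_mem_rootFinset hβ)
      (toLinear_injective.ne hαβ), dualForm_eq_mul_chainBotCoeff_sub_chainTopCoeff hα, ← hγ,
      ih hγ0 hαγ hbot, htop, hp]
    push_cast
    ring

lemma IsRootVectorSystem.exists_rat_normConst_eq {e : Module.Dual K H → L}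
    (he : IsRootVectorSystem e) (χ ψ : Module.Dual K H) :
    ∃ q : ℚ, 0 ≤ q ∧ normConst e χ ψ = q := by
  by_cases hχ : χ ∈ rootFinset H
  · by_cases hψ : ψ ∈ rootFinset H
    · obtain ⟨α, hα, rfl⟩ := exists_toLinear_eq_of_mem_rootFinset hχ
      obtain ⟨β, hβ, rfl⟩ := exists_toLinear_eq_of_mem_rootFinset hψ
      obtain ⟨q, hq0, hq⟩ := exists_rat_dualForm_self_eq hα
      refine ⟨q / 2 * (chainTopCoeff α β * (chainBotCoeff α β + 1)), by positivity, ?_⟩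
      rw [he.normConst_eq hα hβ, hq]
      push_cast
      rfl
    · exact ⟨0, le_rfl, by rw [normConst_comm, he.normConst_eq_zero_of_notMem hψ, Rat.cast_zero]⟩
  · exact ⟨0, le_rfl, by rw [he.normConst_eq_zero_of_notMem hχ, Rat.cast_zero]⟩

end Positivity

section HighestWeight

variable {K L : Type*} [Field K] [LieRing L] [LieAlgebra K L] [FiniteDimensional K L] [CharZero K]
  {H : LieSubalgebra K L} [H.IsCartanSubalgebra]

/-- The vector `v` has weight `χ` and is killed by all positive root spaces. The positive roots are
those on which `f` is positive. -/
structure IsHighestWeightVector {M : Type*} [AddCommGroup M] [Module K M] [LieRingModule L M]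
    (f : Module.Dual K H →+ ℚ) (χ : Module.Dual K H) (v : M) : Prop where
  ne_zero : v ≠ 0
  lie_coe : ∀ h : H, ⁅(h : L), v⁆ = χ h • v
  lie_eq_zero : ∀ α ∈ rootFinset H, 0 < f α → ∀ x ∈ rootSpace H α, ⁅x, v⁆ = 0

lemma exists_isHighestWeightVector {M : Type*} [AddCommGroup M] [Module K M] [LieRingModule L M]
    [LieModule K L M] [FiniteDimensional K M] [Nontrivial M] [IsTriangularizable K H M]
    (f : Module.Dual K H →+ ℚ) :
    ∃ (χ : Module.Dual K H) (v : M), IsHighestWeightVector f χ v := by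
  have : Nonempty (Weight K H M) := by
    by_contra! hempty
    exact bot_ne_top ((iSup_of_empty fun χ : Weight K H M => genWeightSpace M χ).symm.trans
      (iSup_genWeightSpace_eq_top' K H M))
  obtain ⟨χ, hχ⟩ := Finite.exists_max fun χ : Weight K H M => f χ.toLinear
  obtain ⟨v, hv0, hv⟩ := exists_forall_lie_eq_smul K H M χ
  refine ⟨χ.toLinear, v, hv0, hv, fun α _ hα x hx => ?_⟩
  have hmem : ⁅x, v⁆ ∈ genWeightSpace M (α + χ.toLinear : Module.Dual K H) :=
    lie_mem_genWeightSpace_of_mem_genWeightSpace hx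
      (weightSpace_le_genWeightSpace M χ ((mem_weightSpace _ _).2 hv))
  by_contra hne
  let ψ : Weight K H M := ⟨⇑(α + χ.toLinear), fun hbot => hne (by rwa [hbot] at hmem)⟩
  have hψ : f ψ.toLinear = f α + f χ.toLinear := map_add f α χ.toLinear
  linarith [hχ ψ]

variable [IsKilling K L]

/-- The scalar `(χ, χ + 2ρ)` by which the Casimir element acts on a highest weight vector of weight
`χ`, where `2ρ` is the sum of the positive roots, those on which `f` is positive. -/
noncomputable def casimirScalar (f : Module.Dual K H →+ ℚ) (χ : Module.Dual K H) : K :=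
  dualForm H χ χ + ∑ α ∈ rootFinset H with 0 < f α, dualForm H α χ

variable [IsTriangularizable K H L] {f : Module.Dual K H →+ ℚ} (hf : ∀ α ∈ rootFinset H, f α ≠ 0)
include hf

theorem IsHighestWeightVector.casimir_apply {M ι : Type*} [AddCommGroup M] [Module K M]
    [LieRingModule L M] [LieModule K L M] [Fintype ι] [DecidableEq ι] {b b' : ι → L}
    (hb : IsDualPair (killingForm K L) b b') {χ : Module.Dual K H} {v : M}
    (hv : IsHighestWeightVector f χ v) : casimir K M b b' v = casimirScalar f χ • v := by
  classical
  obtain ⟨g, g', hg⟩ := exists_isDualPair (traceForm_cartan_nondegenerate K L H)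
    ⟨traceForm_comm K H L⟩
  obtain ⟨e, he⟩ := exists_isRootVectorSystem H
  have cartan_part : ∑ i, ⁅(g i : L), ⁅(g' i : L), v⁆⁆ = dualForm H χ χ • v := by
    rw [← sum_mul_eq_dualForm hg, Finset.sum_smul]
    simp only [hv.lie_coe, lie_smul, smul_smul, mul_comm]
  have root_part {α : Module.Dual K H} (hα : α ∈ rootFinset H) (hpos : 0 < f α) :
      ⁅e α, ⁅e (-α), v⁆⁆ + ⁅e (-α), ⁅e (-(-α)), v⁆⁆ = dualForm H α χ • v := by
    rw [neg_neg, hv.lie_eq_zero α hα hpos _ (he.mem_rootSpace α), lie_zero, add_zero, leibniz_lie,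
      hv.lie_eq_zero α hα hpos _ (he.mem_rootSpace α), lie_zero, add_zero, he.lie_neg hα,
      hv.lie_coe, dualForm_apply]
  rw [casimir_eq_casimir hb (he.isDualPair hg)]
  simp only [casimir, Fintype.sum_sum_type, Sum.elim_inl, Sum.elim_inr, LinearMap.add_apply,
    LinearMap.sum_apply, Module.End.mul_apply, toEnd_apply_apply]
  rw [cartan_part, Finset.sum_coe_sort (rootFinset H) fun α => ⁅e α, ⁅e (-α), v⁆⁆,
    sum_eq_sum_pos_add_neg (fun _ => neg_mem_rootFinset) hf, casimirScalar, add_smul,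
    Finset.sum_smul]
  congr 1
  refine Finset.sum_congr rfl fun α hα => ?_
  exact root_part (Finset.mem_filter.1 hα).1 (Finset.mem_filter.1 hα).2

theorem exists_rat_casimirScalar_sum_eq {S : Finset (Module.Dual K H)} (hS : S ⊆ rootFinset H) :
    ∃ q : ℚ, q ≤ S.card ∧ casimirScalar f (∑ s ∈ S, s) = q := by
  classical
  obtain ⟨e, he⟩ := exists_isRootVectorSystem H
  choose n hn hne using he.exists_rat_normConst_eq
  have hdual {χ ψ : Module.Dual K H} (hχ : χ ∈ rootFinset H) (hψ : ψ ∈ rootFinset H) :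
      dualForm H χ ψ = (n (-χ) ψ - n χ ψ : ℚ) := by
    rw [he.dualForm_eq_sub hχ hψ, hne, hne, Rat.cast_sub]
  refine ⟨_, sum_sub_add_sum_pos_sub_le_card (n := n) (fun _ => neg_mem_rootFinset) hf hn
    (fun χ ψ hχ => ?_) (fun χ ψ => ?_) (fun χ _ ψ hψ hχψ => ?_) fun χ hχ => ?_, ?_⟩
  · exact_mod_cast (hne χ ψ).symm.trans (he.normConst_eq_zero_of_notMem hχ)
  · exact_mod_cast (hne _ _).symm.trans ((normConst_neg_left_comm e χ ψ).trans (hne _ _))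
  · exact_mod_cast (hne _ _).symm.trans ((he.normConst_neg_left_eq (hS hψ) hχψ).trans (hne _ _))
  · have := he.dualForm_self_add_sum_normConst (hS hχ)
    rw [he.dualForm_eq_sub (hS hχ) (hS hχ), normConst_self, sub_zero] at this
    simp only [hne] at this
    exact_mod_cast this
  · rw [casimirScalar, LinearMap.map_sum₂, Rat.cast_add]
    simp only [map_sum, Rat.cast_sum]
    rw [Finset.sum_comm (s := rootFinset H |>.filter _)]
    congr 1
    · refine Finset.sum_congr rfl fun s hs => Finset.sum_congr rfl fun t ht => ?_
      exact hdual (hS hs) (hS ht)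
    · refine Finset.sum_congr rfl fun s hs => Finset.sum_congr rfl fun α hα => ?_
      exact hdual (Finset.mem_filter.1 hα).1 (hS hs)

end HighestWeight

section ExteriorPower

attribute [local instance] LieRing.ofAssociativeRing

/-- The derivations of the exterior algebra that extend the operators of a representation of `L` on
`M` form a representation of `L`. -/
def IsDerivationExtending.lieHom {R L M : Type*} [CommRing R] [LieRing L] [LieAlgebra R L]
    [AddCommGroup M] [Module R M] {φ : L →ₗ⁅R⁆ Module.End R M}
    {ρ : L → Module.End R (ExteriorAlgebra R M)} (h : ∀ x, IsDerivationExtending (φ x) (ρ x)) :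
    L →ₗ⁅R⁆ Module.End R (ExteriorAlgebra R M) where
  toFun := ρ
  map_add' x y := (h (x + y)).unique (φ.map_add x y ▸ (h x).add (h y))
  map_smul' r x := (h (r • x)).unique (φ.map_smul r x ▸ (h x).smul r)
  map_lie' {x y} := (h ⁅x, y⁆).unique (φ.map_lie x y ▸ (h x).lie (h y))

variable {K L : Type*} [Field K] [LieRing L] [LieAlgebra K L] [FiniteDimensional K L] [CharZero K]
  {H : LieSubalgebra K L} [H.IsCartanSubalgebra]

lemma exists_subset_rootFinset_eq_sum [IsTriangularizable K H L] [IsKilling K L]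
    {ρ : L → Module.End K (ExteriorAlgebra K L)}
    (hρ : ∀ x, IsDerivationExtending (ad K L x) (ρ x)) {k : ℕ} {u : ExteriorAlgebra K L}
    (hu : u ∈ ⋀[K]^k L) (hu0 : u ≠ 0) {χ : Module.Dual K H} (hχ : ∀ h : H, ρ h u = χ h • u) :
    ∃ S ⊆ rootFinset H, S.card ≤ k ∧ ∑ s ∈ S, s = χ := by
  classical
  obtain ⟨g, g', hg⟩ := exists_isDualPair (traceForm_cartan_nondegenerate K L H)
    ⟨traceForm_comm K H L⟩
  obtain ⟨e, he⟩ := exists_isRootVectorSystem H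
  have hd := he.isDualPair hg
  let β := Module.Basis.mk hd.linearIndependent hd.span_eq_top.ge
  let μ : Fin (Module.finrank K H) ⊕ rootFinset H → Module.Dual K H := Sum.elim 0 Subtype.val
  have hβ (h : H) (i) : ad K L h (β i) = μ i h • β i := by
    rw [Module.Basis.mk_apply]
    rcases i with i | α
    · change ⁅(h : L), (g i : L)⁆ = (0 : K) • (g i : L)
      rw [← LieSubalgebra.coe_bracket, trivial_lie_zero, zero_smul, ZeroMemClass.coe_zero]
    · exact he.lie_coe h α
  obtain ⟨s, hs, hsum⟩ := IsDerivationExtending.exists_card_eq_forall_eq_sum β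
    (fun h : H => hρ h) (μ := fun i h => μ i h) hβ hu hu0 hχ
  refine ⟨s.toRight.map (Function.Embedding.subtype _), Finset.map_subtype_subset _, ?_,
    LinearMap.ext fun h => ?_⟩
  · rw [Finset.card_map, ← hs]
    exact Finset.card_toRight_le
  · rw [hsum, Finset.sum_map, LinearMap.sum_apply, ← s.toLeft_disjSum_toRight, Finset.sum_disjSum]
    simp [μ]

lemma exists_mem_isHighestWeightVector_casimirScalar_eq [IsAlgClosed K] [IsKilling K L]
    {f : Module.Dual K H →+ ℚ} (hf : ∀ α ∈ rootFinset H, f α ≠ 0)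
    {M ι : Type*} [AddCommGroup M] [Module K M] [LieRingModule L M] [LieModule K L M]
    [Fintype ι] [DecidableEq ι] {b b' : ι → L} (hb : IsDualPair (killingForm K L) b b')
    (N : LieSubmodule K L M) [FiniteDimensional K N] {c : K} {u : M} (hu : u ∈ N) (hu0 : u ≠ 0)
    (hc : casimir K M b b' u = c • u) :
    ∃ (χ : Module.Dual K H) (v : M), v ∈ N ∧ IsHighestWeightVector f χ v ∧
      casimirScalar f χ = c := by
  let W := N ⊓ casimirEigenspace M hb c
  have : FiniteDimensional K W := Submodule.finiteDimensional_inf_left N.toSubmodule _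
  have : Nontrivial W :=
    ⟨⟨u, hu, Module.End.mem_eigenspace_iff.2 hc⟩, 0, fun h => hu0 congr(($h).1)⟩
  obtain ⟨χ, ⟨v, hvN, hvc⟩, hv⟩ := exists_isHighestWeightVector (M := W) f
  have hv' : IsHighestWeightVector f χ v :=
    ⟨fun h => hv.ne_zero (Subtype.ext h), fun h => congr(($(hv.lie_coe h)).1),
      fun α hα hpos x hx => congr(($(hv.lie_eq_zero α hα hpos x hx)).1)⟩
  refine ⟨χ, v, hvN, hv', smul_left_injective K hv'.ne_zero ?_⟩
  exact (hv'.casimir_apply hf hb).symm.trans (Module.End.mem_eigenspace_iff.1 hvc)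

theorem _root_.casimir_eigenvalue_le_on_exterior_power_general {K L κ : Type*} [Field K]
    [CharZero K] [IsAlgClosed K] [LieRing L] [LieAlgebra K L] [FiniteDimensional K L] [Fintype κ]
    [DecidableEq κ] {b b' : κ → L} (hb : IsDualPair (killingForm K L) b b')
    {ρ : L → Module.End K (ExteriorAlgebra K L)}
    (hρ : ∀ x, IsDerivationExtending (ad K L x) (ρ x)) {k : ℕ} {c : K} {u : ExteriorAlgebra K L}
    (hu : u ∈ ⋀[K]^k L) (hu0 : u ≠ 0) (hc : (∑ i, ρ (b i) * ρ (b' i)) u = c • u) :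
    ∃ q : ℚ, q ≤ k ∧ c = q := by
  let _ := LieRingModule.compLieHom (ExteriorAlgebra K L) (IsDerivationExtending.lieHom hρ)
  have := LieModule.compLieHom (ExteriorAlgebra K L) (IsDerivationExtending.lieHom hρ)
  have := hb.isKilling
  obtain ⟨x, _⟩ := exists_isCartanSubalgebra_engel K L
  obtain ⟨f, hf⟩ := exists_addMonoidHom_rat_ne_zero (LieSubalgebra.engel K x)
  let N : LieSubmodule K L (ExteriorAlgebra K L) :=
    { __ := ⋀[K]^k L, lie_mem := fun {x} _ => (hρ x).map_mem_exteriorPower }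
  have : FiniteDimensional K N := inferInstanceAs (FiniteDimensional K (⋀[K]^k L))
  obtain ⟨χ, v, hvN, hv, rfl⟩ :=
    exists_mem_isHighestWeightVector_casimirScalar_eq hf hb N hu hu0 hc
  obtain ⟨S, hS, hcard, rfl⟩ := exists_subset_rootFinset_eq_sum hρ hvN hv.ne_zero hv.lie_coe
  obtain ⟨q, hq, hqc⟩ := exists_rat_casimirScalar_sum_eq hf hS
  exact ⟨q, hq.trans (by exact_mod_cast hcard), hqc⟩

end ExteriorPower

end KostantCasimir

/-- Let `g` be a finite-dimensional complex semisimple Lie algebra acting on its exterior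
algebra by the adjoint action `ρ` (the derivation extending `ad`), and let
`Cas = ∑ᵢ ρ(bᵢ) ρ(b'ᵢ)` be the Casimir operator, where `b`, `b'` are dual bases with
respect to the Killing form.  Then every eigenvalue of `Cas` on `∧^k g` is (real and)
at most `k`. -/
theorem casimir_eigenvalue_le_on_exterior_power
    {L : Type*} [LieRing L] [LieAlgebra ℂ L] [Module.Finite ℂ L]
    [LieAlgebra.IsSemisimple ℂ L]
    {κ : Type*} [Fintype κ] [DecidableEq κ] (b b' : κ → L)
    (hdual : ∀ i j, killingForm ℂ L (b i) (b' j) = if i = j then 1 else 0)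
    (hbasis : Submodule.span ℂ (Set.range b) = ⊤)
    (ρ : L → Module.End ℂ (ExteriorAlgebra ℂ L))
    (hρι : ∀ x y : L, ρ x (ι ℂ y) = ι ℂ ⁅x, y⁆)
    (hρmul : ∀ x u v, ρ x (u * v) = ρ x u * v + u * ρ x v)
    (hρone : ∀ x, ρ x 1 = 0)
    (k : ℕ) (c : ℂ) (u : ExteriorAlgebra ℂ L) (hu : u ∈ ⋀[ℂ]^k L) (hu0 : u ≠ 0)
    (heig : (∑ i, ρ (b i) * ρ (b' i)) u = c • u) :
    c.re ≤ (k : ℝ) ∧ c.im = 0 := by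
  obtain ⟨q, hq, rfl⟩ := casimir_eigenvalue_le_on_exterior_power_general
    ⟨hdual, hbasis⟩ (fun x => ⟨hρι x, hρmul x⟩) hu hu0 heig
  exact ⟨by exact_mod_cast hq, by simp⟩
end

section
/- Let g be a complex reductive Lie algebra identified with its dual via the Killing form, and let x ∈ g be regular (i.e., dim [g, x] = 2r where r is the number of positive roots). Then dim g^x = ℓ = rank g, and the centralizer g^x is an abelian Lie subalgebra of g. -/
open LieAlgebra

/-! Let `Z` be the center of `L`; the Killing form `κ` of `L ⧸ Z` is nondegenerate. The Engel
subalgebra of a generic `h` is abelian modulo `Z`, hence contained in `ker (ad h)` by the last step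
below, so `dim ker (ad w) ≥ rank L` for every `w`, and an `x` with `dim ker (ad x) = rank L`
maximizes the rank of `ad`. Along a pencil `ad x + t • ad d` the rank then cannot jump up at
`t ≠ 0`, which forces `⁅d, y⁆ ∈ range (ad x)` for `y` in the centralizer of `x`. Modulo `Z`, if
`⁅d, y⁆ = ⁅x, w⁆` and `⁅x, z⁆ = 0`, then `κ(d, ⁅y, z⁆) = κ(⁅x, w⁆, z) = -κ(w, ⁅x, z⁆) = 0`; as `d`
is arbitrary, `⁅y, z⁆ ∈ Z`. Finally a bracket in `Z` is zero: for a functional `f` on `L`, the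
cocycle `f ⁅u, v⁆` on `L ⧸ Z` is a coboundary `κ(d, ⁅u, v⁆)`, so `f` vanishes on every bracket that
vanishes modulo `Z`. -/

section Pencil

variable {K E V : Type*} [Field K] [AddCommGroup E] [Module K E] [Module.Finite K E]
  [AddCommGroup V] [Module K V]

theorem finite_setOfPred_not_injective_add_smul {A : E →ₗ[K] V} (hA : Function.Injective A)
    (B : E →ₗ[K] V) : {t : K | ¬ Function.Injective (A + t • B)}.Finite := by
  obtain ⟨φ, hφ⟩ := A.exists_leftInverse_of_injective (LinearMap.ker_eq_bot.mpr hA)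
  have hfinite : ((fun t : K ↦ -t⁻¹) ⁻¹' spectrum K (φ ∘ₗ B)).Finite :=
    (Module.End.finite_spectrum (φ ∘ₗ B)).preimage (neg_injective.comp inv_injective).injOn
  refine hfinite.subset fun t ht ↦ by_contra fun hspec ↦ ht ?_
  have hcomp : φ ∘ₗ (A + t • B) = 1 + t • (φ ∘ₗ B) := by
    rw [LinearMap.comp_add, hφ, LinearMap.comp_smul]; rfl
  have hunit : IsUnit (1 + t • (φ ∘ₗ B)) := by
    rcases eq_or_ne t 0 with rfl | ht0
    · simp
    · have hresolvent : IsUnit (algebraMap K (Module.End K E) (-t⁻¹) - φ ∘ₗ B) :=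
        spectrum.notMem_iff.mp hspec
      convert hresolvent.smul (Units.mk0 (-t) (neg_ne_zero.mpr ht0)) using 1
      simp [Units.smul_def, Algebra.algebraMap_eq_smul_one, smul_sub, smul_smul, ht0]
  have hinj : Function.Injective (φ ∘ₗ (A + t • B)) := by
    rw [hcomp]
    exact ((Module.End.isUnit_iff _).mp hunit).injective
  exact Function.Injective.of_comp hinj

theorem finite_setOfPred_finrank_ker_lt_finrank_ker_add_smul (A B : E →ₗ[K] V) :
    {t : K | Module.finrank K (LinearMap.ker A) <
      Module.finrank K (LinearMap.ker (A + t • B))}.Finite := by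
  obtain ⟨C, hC⟩ := (LinearMap.ker A).exists_isCompl
  have hA : Function.Injective (A.domRestrict C) :=
    LinearMap.injective_domRestrict_iff.mpr hC.disjoint.symm
  refine (finite_setOfPred_not_injective_add_smul hA (B.domRestrict C)).subset fun t ht hinj ↦ ?_
  have hdisjoint : Disjoint C (LinearMap.ker (A + t • B)) :=
    LinearMap.injective_domRestrict_iff.mp hinj
  have hle := Submodule.finrank_add_finrank_le_of_disjoint hdisjoint
  rw [← Submodule.finrank_add_eq_of_isCompl hC, add_comm] at hle
  exact ht.not_ge (Nat.le_of_add_le_add_right hle)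

-- If `B y` were not in the range of `A`, adjoining it to the range of `A + t • B` for general `t`
-- would give rank `> rank A`; but it lies there already, since `(A + t • B) (t⁻¹ • y) = B y`.
theorem apply_mem_range_of_finrank_ker_le [Infinite K] {A B : E →ₗ[K] V}
    (hmin : ∀ t : K, Module.finrank K (LinearMap.ker A) ≤
      Module.finrank K (LinearMap.ker (A + t • B)))
    {y : E} (hy : A y = 0) : B y ∈ LinearMap.range A := by
  by_contra hBy
  obtain ⟨C, hC⟩ := (LinearMap.ker A).exists_isCompl
  let A' : C × K →ₗ[K] V := (A.domRestrict C).coprod (LinearMap.toSpanSingleton K V (B y))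
  let B' : C × K →ₗ[K] V := (B.domRestrict C).coprod 0
  have hA' : Function.Injective A' := by
    have hdisjoint : Disjoint (LinearMap.range (A.domRestrict C))
        (LinearMap.range (LinearMap.toSpanSingleton K V (B y))) := by
      rw [LinearMap.range_toSpanSingleton, Submodule.disjoint_span_singleton]
      exact fun h ↦ absurd (LinearMap.range_comp_le_range _ _ h) hBy
    rw [← LinearMap.ker_eq_bot, LinearMap.ker_coprod_of_disjoint_range _ _ hdisjoint,
      LinearMap.ker_eq_bot.mpr (LinearMap.injective_domRestrict_iff.mpr hC.disjoint.symm),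
      LinearMap.ker_toSpanSingleton K (fun h : B y = 0 ↦ hBy (h ▸ zero_mem _)), Submodule.prod_bot]
  obtain ⟨t, ht⟩ := ((finite_setOfPred_not_injective_add_smul hA' B').union
    (Set.finite_singleton (0 : K))).infinite_compl.nonempty
  obtain ⟨hinj, ht0⟩ : Function.Injective (A' + t • B') ∧ t ≠ 0 := by
    simpa [and_comm] using ht
  have hrange : LinearMap.range (A' + t • B') ≤ LinearMap.range (A + t • B) := by
    rintro _ ⟨⟨c, s⟩, rfl⟩
    refine ⟨c + (s * t⁻¹) • y, ?_⟩
    simp [A', B', hy, smul_smul, mul_left_comm t, ht0, add_assoc, add_comm (s • B y)]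
  have hrank := Submodule.finrank_mono hrange
  rw [LinearMap.finrank_range_of_inj hinj, Module.finrank_prod, Module.finrank_self] at hrank
  have := (A + t • B).finrank_range_add_finrank_ker
  have := Submodule.finrank_add_eq_of_isCompl hC
  have := hmin t
  omega

end Pencil

theorem finite_setOfPred_eval_add_smul_eq_zero {K ι : Type*} [Field K]
    {p : MvPolynomial ι K} {a b : ι → K} {t₀ : K}
    (h₀ : MvPolynomial.eval (a + t₀ • b) p ≠ 0) :
    {t : K | MvPolynomial.eval (a + t • b) p = 0}.Finite := by
  let q : Polynomial K :=
    MvPolynomial.aeval (fun i ↦ Polynomial.C (a i) + Polynomial.X * Polynomial.C (b i)) p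
  have hq (t : K) : q.eval t = MvPolynomial.eval (a + t • b) p := by
    change Polynomial.aeval t (MvPolynomial.aeval _ p) = MvPolynomial.aeval (a + t • b) p
    rw [MvPolynomial.comp_aeval_apply]
    congr 2
    funext i
    simp [mul_comm t]
  have hq₀ : q ≠ 0 := fun h ↦ h₀ (by rw [← hq, h, Polynomial.eval_zero])
  simpa only [Polynomial.IsRoot, hq] using Polynomial.finite_setOfPred_isRoot hq₀

section Regular

open LieSubalgebra (engel)

variable {K L : Type*} [Field K] [LieRing L] [LieAlgebra K L] [Module.Finite K L]

theorem finite_setOfPred_not_isRegular_add_smul {x v : L} {t₀ : K} (h₀ : IsRegular K (x + t₀ • v)) :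
    {t : K | ¬ IsRegular K (x + t • v)}.Finite := by
  classical
  let b := Module.finBasis K L
  simp only [isRegular_iff_coeff_polyCharpoly_rank_ne_zero K b, not_not, map_add,
    map_smul, Finsupp.coe_add, Finsupp.coe_smul] at h₀ ⊢
  exact finite_setOfPred_eval_add_smul_eq_zero h₀

variable [Infinite K]

theorem engel_le_engel_of_isRegular {x y : L} (hx : IsRegular K x) (hy : y ∈ engel K x) :
    engel K x ≤ engel K y := by
  have hmin (z : L) (hz : engel K z ≤ engel K x) : engel K z = engel K x :=
    LieSubalgebra.toSubmodule_injective <| Submodule.eq_of_le_of_finrank_le hz <|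
      (isRegular_iff_finrank_engel_eq_rank K x).mp hx ▸ rank_le_finrank_engel K z
  let E : {engel K z | z ∈ engel K x} := ⟨_, x, LieSubalgebra.self_mem_engel K x, rfl⟩
  have hE : IsMin E := by
    rintro ⟨_, z, -, rfl⟩
    exact fun hz ↦ (hmin z hz).ge
  have hcard : Module.finrank K L ≤ Cardinal.mk K :=
    Cardinal.natCast_le_aleph0.trans (Cardinal.infinite_iff.mp ‹_›)
  exact engel_isBot_of_isMin hcard _ E le_rfl hE ⟨_, y, hy, rfl⟩

theorem isCartanSubalgebra_engel_of_isRegular {x : L} (hx : IsRegular K x) :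
    (engel K x).IsCartanSubalgebra where
  nilpotent := LieSubalgebra.isNilpotent_of_forall_le_engel _ fun _ ↦
    engel_le_engel_of_isRegular hx
  self_normalizing := LieSubalgebra.normalizer_engel K x

end Regular

section Cocycle

variable {K S : Type*} [Field K] [LieRing S] [LieAlgebra K S] [Module.Finite K S] [IsKilling K S]

-- Through the Killing form, a cocycle is a derivation of `S`, and derivations of `S` are inner.
theorem exists_eq_killingForm_lie_of_cocycle {β : S →ₗ[K] S →ₗ[K] K}
    (hβ : ∀ a b c, β ⁅a, b⁆ c = β a ⁅b, c⁆ - β b ⁅a, c⁆) :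
    ∃ d, ∀ a b, β a b = killingForm K S d ⁅a, b⁆ := by
  let e : S ≃ₗ[K] Module.Dual K S :=
    (killingForm K S).toDual (IsKilling.killingForm_nondegenerate K S)
  let D : S →ₗ[K] S := e.symm ∘ₗ β
  have hD (a b : S) : killingForm K S (D a) b = β a b :=
    LinearMap.BilinForm.apply_toDual_symm_apply
      (hB := IsKilling.killingForm_nondegenerate K S) ..
  have hleibniz (a b : S) : D ⁅a, b⁆ = ⁅a, D b⁆ - ⁅b, D a⁆ := by
    refine LinearMap.ker_eq_bot.mp (IsKilling.ker_killingForm_eq_bot K S) ?_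
    ext c
    simp only [map_sub, LinearMap.sub_apply, LieModule.traceForm_apply_lie_apply', hD, hβ]
    ring
  obtain ⟨d, hd⟩ := LieDerivation.IsKilling.exists_eq_ad ⟨D, hleibniz⟩
  refine ⟨d, fun a b ↦ ?_⟩
  have hDa : D a = ⁅d, a⁆ := by simpa using (DFunLike.congr_fun hd a).symm
  rw [← hD, hDa]
  exact LieModule.traceForm_apply_lie_apply ..

end Cocycle

section CentralQuotient

open LieSubmodule.Quotient (mk mk' mk_bracket mk_eq_zero' surjective_mk')

attribute [local instance 100] LieRing.ofAssociativeRing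

theorem lie_eq_lie_of_mk_eq_mk {R L : Type*} [CommRing R] [LieRing L] [LieAlgebra R L]
    {u u' v v' : L} (hu : (mk u : L ⧸ center R L) = mk u')
    (hv : (mk v : L ⧸ center R L) = mk v') : ⁅u, v⁆ = ⁅u', v'⁆ := by
  have hu_sub : ⁅v, u - u'⁆ = 0 := (Submodule.Quotient.eq _).mp hu v
  have hv_sub : ⁅u', v - v'⁆ = 0 := (Submodule.Quotient.eq _).mp hv u'
  rw [lie_sub, sub_eq_zero] at hu_sub hv_sub
  rw [← hv_sub, ← lie_skew, hu_sub, lie_skew]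

variable {K L : Type*} [Field K] [LieRing L] [LieAlgebra K L] [Module.Finite K L]
  [IsKilling K (L ⧸ center K L)]

theorem exists_apply_lie_eq_killingForm_mk (f : Module.Dual K L) :
    ∃ d : L, ∀ u v : L,
      f ⁅u, v⁆ = killingForm K (L ⧸ center K L) (mk d) (mk ⁅u, v⁆) := by
  obtain ⟨σ, hσ⟩ := (mk' (center K L)).toLinearMap.exists_rightInverse_of_surjective
    (LinearMap.range_eq_top.mpr (surjective_mk' _))
  replace hσ (a : L ⧸ center K L) : mk (σ a) = a := LinearMap.congr_fun hσ a
  let β : L ⧸ center K L →ₗ[K] L ⧸ center K L →ₗ[K] K :=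
    ((ad K L).toLinearMap.compl₁₂ σ σ).compr₂ f
  have hβ (u v : L) : β (mk u) (mk v) = f ⁅u, v⁆ :=
    congrArg f (lie_eq_lie_of_mk_eq_mk (hσ _) (hσ _))
  have hcocycle (a b c : L ⧸ center K L) : β ⁅a, b⁆ c = β a ⁅b, c⁆ - β b ⁅a, c⁆ := by
    rw [← hσ a, ← hσ b, ← hσ c]
    simp only [← mk_bracket, hβ, ← map_sub, leibniz_lie (σ a), add_sub_cancel_right]
  obtain ⟨d, hd⟩ := exists_eq_killingForm_lie_of_cocycle hcocycle
  refine ⟨σ d, fun u v ↦ ?_⟩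
  rw [hσ, mk_bracket, ← hd, hβ]

theorem lie_eq_zero_of_lie_mem_center {y z : L} (h : ⁅y, z⁆ ∈ center K L) : ⁅y, z⁆ = 0 := by
  refine (Module.forall_dual_apply_eq_zero_iff K _).mp fun f ↦ ?_
  obtain ⟨d, hd⟩ := exists_apply_lie_eq_killingForm_mk f
  rw [hd, mk_eq_zero'.mpr h, map_zero]

end CentralQuotient

section CentralizerDimension

open LieSubmodule.Quotient (mk mk' mk_bracket mk_eq_zero' surjective_mk')
open Module (finrank)
open LieSubalgebra (engel)

theorem mk_mem_engel_mk {R L : Type*} [CommRing R] [LieRing L] [LieAlgebra R L] {I : LieIdeal R L}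
    {x y : L} (hy : y ∈ engel R x) : (mk y : L ⧸ I) ∈ engel R (mk x : L ⧸ I) := by
  obtain ⟨n, hn⟩ := (LieSubalgebra.mem_engel_iff R x y).mp hy
  refine (LieSubalgebra.mem_engel_iff R _ _).mpr ⟨n, ?_⟩
  calc (ad R (L ⧸ I) (mk x) ^ n) (mk y)
    _ = mk' I ((ad R L x ^ n) y) := LieModule.toEnd_pow_apply_map (mk' I) n x y
    _ = 0 := by rw [hn, map_zero]

variable {K L : Type*} [Field K] [Infinite K] [LieRing L] [LieAlgebra K L] [Module.Finite K L]

theorem lie_mem_range_ad_of_finrank_ker_le {x : L}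
    (hmin : ∀ w : L, finrank K (LinearMap.ker (ad K L x)) ≤ finrank K (LinearMap.ker (ad K L w)))
    {y : L} (hy : ⁅x, y⁆ = 0) (d : L) : ⁅d, y⁆ ∈ LinearMap.range (ad K L x) := by
  refine apply_mem_range_of_finrank_ker_le (A := ad K L x) (B := ad K L d) (fun t ↦ ?_) hy
  rw [← map_smul, ← map_add]
  exact hmin _

variable [IsKilling K (L ⧸ center K L)]

theorem engel_le_ker_ad_of_isRegular_mk {h : L} (hh : IsRegular K (mk h : L ⧸ center K L)) :
    (engel K h).toSubmodule ≤ LinearMap.ker (ad K L h) := by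
  intro y hy
  have hcartan := isCartanSubalgebra_engel_of_isRegular hh
  let h' : engel K (mk h : L ⧸ center K L) := ⟨mk h, LieSubalgebra.self_mem_engel K _⟩
  let y' : engel K (mk h : L ⧸ center K L) := ⟨mk y, mk_mem_engel_mk hy⟩
  have hlie : (mk ⁅h, y⁆ : L ⧸ center K L) = 0 :=
    congrArg Subtype.val (trivial_lie_zero _ _ h' y')
  exact lie_eq_zero_of_lie_mem_center (mk_eq_zero'.mp hlie)

-- A general point of the line through `w` and an element regular modulo the center is itself
-- regular modulo the center, and its centralizer is no larger than that of `w`.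
theorem rank_le_finrank_ker_ad (w : L) : rank K L ≤ finrank K (LinearMap.ker (ad K L w)) := by
  obtain ⟨s, hs⟩ := exists_isRegular K (L ⧸ center K L)
  obtain ⟨h, rfl⟩ := surjective_mk' _ s
  have hregular : {t : K | ¬ IsRegular K (mk (w + t • (h - w)) : L ⧸ center K L)}.Finite :=
    finite_setOfPred_not_isRegular_add_smul (x := mk w) (v := mk (h - w)) (t₀ := 1)
      (by simpa using hs)
  have hker := finite_setOfPred_finrank_ker_lt_finrank_ker_add_smul (ad K L w) (ad K L (h - w))
  obtain ⟨t, ht⟩ := (hregular.union hker).infinite_compl.nonempty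
  simp only [Set.mem_compl_iff, Set.mem_union, Set.mem_ofPred_eq, not_or, not_not, not_lt] at ht
  rw [← map_smul, ← map_add] at ht
  calc rank K L
    _ ≤ finrank K (engel K (w + t • (h - w))) := rank_le_finrank_engel K _
    _ ≤ finrank K (LinearMap.ker (ad K L (w + t • (h - w)))) :=
      Submodule.finrank_mono (engel_le_ker_ad_of_isRegular_mk ht.1)
    _ ≤ finrank K (LinearMap.ker (ad K L w)) := ht.2

theorem lie_eq_zero_of_finrank_ker_le {x : L}
    (hmin : ∀ w : L, finrank K (LinearMap.ker (ad K L x)) ≤ finrank K (LinearMap.ker (ad K L w)))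
    {y z : L} (hy : ⁅x, y⁆ = 0) (hz : ⁅x, z⁆ = 0) : ⁅y, z⁆ = 0 := by
  suffices horthogonal : ∀ s : L ⧸ center K L,
      killingForm K (L ⧸ center K L) s (mk ⁅y, z⁆) = 0 from
    lie_eq_zero_of_lie_mem_center <| mk_eq_zero'.mp <|
      (IsKilling.killingForm_nondegenerate K (L ⧸ center K L)).2 _ horthogonal
  intro s
  obtain ⟨d, rfl⟩ := surjective_mk' _ s
  obtain ⟨w, hw⟩ : ∃ w, ⁅x, w⁆ = ⁅d, y⁆ := lie_mem_range_ad_of_finrank_ker_le hmin hy d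
  calc killingForm K (L ⧸ center K L) (mk d) (mk ⁅y, z⁆)
    _ = killingForm K (L ⧸ center K L) (mk ⁅x, w⁆) (mk z) := by
      rw [hw, mk_bracket, mk_bracket, LieModule.traceForm_apply_lie_apply]
    _ = -killingForm K (L ⧸ center K L) (mk w) (mk ⁅x, z⁆) := by
      rw [mk_bracket, mk_bracket, LieModule.traceForm_apply_lie_apply']
    _ = 0 := by rw [hz]; simp

end CentralizerDimension

section Radical

open LieSubmodule.Quotient (mk mk' mk_eq_zero' surjective_mk')

variable {R L : Type*} [CommRing R] [LieRing L] [LieAlgebra R L]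

theorem isSolvable_of_lie_self_le {I J : LieIdeal R L} [IsSolvable J] (h : ⁅I, I⁆ ≤ J) :
    IsSolvable I := by
  obtain ⟨k, hk⟩ := IsSolvable.solvable R J
  refine IsSolvable.mk (R := R) (k := k + 1) ?_
  rw [LieIdeal.derivedSeries_eq_bot_iff] at hk ⊢
  rw [derivedSeriesOfIdeal_add, eq_bot_iff, ← hk]
  exact derivedSeriesOfIdeal_mono h k

variable (R L) in
theorem hasTrivialRadical_quotient_radical [IsNoetherian R L] :
    HasTrivialRadical R (L ⧸ radical R L) := by
  refine (hasTrivialRadical_iff_no_abelian_ideals R _).mpr fun I hI ↦ ?_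
  let J : LieIdeal R L :=
    { I.toSubmodule.comap (mk' (radical R L)).toLinearMap with
      lie_mem := fun {x _} hy ↦ I.lie_mem (x := mk x) hy }
  have hlie : ⁅J, J⁆ ≤ radical R L := by
    refine (LieSubmodule.lie_le_iff _ _ _).mpr fun x hx y hy ↦ mk_eq_zero'.mp ?_
    exact congrArg Subtype.val (trivial_lie_zero I I ⟨mk x, hx⟩ ⟨mk y, hy⟩)
  have hJ : J ≤ radical R L :=
    (LieIdeal.solvable_iff_le_radical R L J).mp (isSolvable_of_lie_self_le hlie)
  refine (LieSubmodule.eq_bot_iff I).mpr fun s hs ↦ ?_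
  obtain ⟨x, rfl⟩ := surjective_mk' _ s
  exact mk_eq_zero'.mpr (hJ hs)

end Radical

theorem centralizer_of_regular_is_abelian_general
    {K L : Type*} [Field K] [Infinite K] [LieRing L] [LieAlgebra K L] [Module.Finite K L]
    [IsKilling K (L ⧸ center K L)] (x : L)
    (hreg : Module.finrank K (LinearMap.range ((ad K L) x)) =
      Module.finrank K L - LieAlgebra.rank K L) :
    Module.finrank K (LinearMap.ker ((ad K L) x)) = LieAlgebra.rank K L ∧
    ∀ y ∈ LinearMap.ker ((ad K L) x), ∀ z ∈ LinearMap.ker ((ad K L) x), ⁅y, z⁆ = 0 := by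
  have hker : Module.finrank K (LinearMap.ker (ad K L x)) = rank K L := by
    have := (ad K L x).finrank_range_add_finrank_ker
    have := rank_le_finrank K L
    omega
  exact ⟨hker, fun y hy z hz ↦
    lie_eq_zero_of_finrank_ker_le (fun w ↦ hker.trans_le (rank_le_finrank_ker_ad w)) hy hz⟩

/-- Let `g` be a complex reductive Lie algebra and `x ∈ g` regular, i.e.
`dim [g,x] = 2r = dim g − rank g` (`r` = number of positive roots).  Then the centralizer
`g^x = ker (ad x)` has dimension `ℓ = rank g` and is an abelian subalgebra. -/
theorem centralizer_of_regular_is_abelian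
    {L : Type*} [LieRing L] [LieAlgebra ℂ L] [Module.Finite ℂ L]
    (hred : LieAlgebra.radical ℂ L = LieAlgebra.center ℂ L)
    (x : L)
    (hreg : Module.finrank ℂ (LinearMap.range ((ad ℂ L) x)) =
      Module.finrank ℂ L - LieAlgebra.rank ℂ L) :
    Module.finrank ℂ (LinearMap.ker ((ad ℂ L) x)) = LieAlgebra.rank ℂ L ∧
    ∀ y ∈ LinearMap.ker ((ad ℂ L) x), ∀ z ∈ LinearMap.ker ((ad ℂ L) x), ⁅y, z⁆ = 0 := by
  have hquotient : HasTrivialRadical ℂ (L ⧸ center ℂ L) :=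
    hred ▸ hasTrivialRadical_quotient_radical ℂ L
  exact centralizer_of_regular_is_abelian_general x hreg
end
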